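/- arXiv:2106.12816 — 3 statements merged into one kernel-verified Lean document; each statement's English description precedes it below -/
import Mathlib

section
/- Suppose the sequences γ = (r_k)_{k≥0}, σ = (s_k)_{k≥0}, τ = (t_k)_{k≥1} of q-nonnegative polynomials satisfy s_0 ≥_q r_0 and s_k ≥_q r_k + t_k for all k ≥ 1. Then both the Catalan–Stieltjes matrix C^{γ,σ,τ} and the Hankel matrix H^{γ,σ,τ} are q-totally positive. -/
/-!
Let `J` be the tridiagonal matrix with rows `(t k, s k, r k)` around the diagonal, so that row
`n + 1` of `c` is row `n` of `c` times `J`.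

* Writing `s k = r k + t k + d k` with `d k` nonnegative, row `k` of `J` is
  `t k • (e (k-1) + e k) + d k • e k + r k • (e k + e (k+1))`, without the `t`
  term for `k = 0`. Expanding a minor of `J` by
  multilinearity in its rows reduces it to minors of the 0-1 matrix whose rows are
  `e 0, e 0 + e 1, e 1, e 1 + e 2, …`, with weakly increasing row indices. Those are all `0` or `1`
  (`qNonneg_det_stair`). Hence `J` is `q`-totally positive (`qtp_tri`), and so is its transpose.
* A minor of a product is nonnegative when the minors of the factors are, by the Cauchy–Binet
  formula (`qNonneg_det_mul`). Applied to `c (n + 1) = c n * J` on rows of positive index, this makes `c`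
  `q`-totally positive by induction (`qtp_of_recurrence`).
* If `B j k` is the `(k, 0)` entry of `J ^ j`, then `B` is the Catalan–Stieltjes matrix of the
  transpose of `J`, hence `q`-totally positive, and `c (i + j) 0 = ∑ k, c i k * B j k`, as both
  sides are the `(0, 0)` entry of `J ^ (i + j)`. Cauchy–Binet then gives the Hankel matrix.
-/


open Polynomial

/-- A polynomial is `q`-nonnegative if all of its coefficients are nonnegative. -/
def QNonneg (f : Polynomial ℝ) : Prop := ∀ i, 0 ≤ f.coeff i

/-- An infinite matrix is `q`-totally positive if every minor (determinant of a square
submatrix with strictly increasing row and column indices) is `q`-nonnegative. -/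
def QTP (M : ℕ → ℕ → Polynomial ℝ) : Prop :=
  ∀ (m : ℕ), 1 ≤ m → ∀ (i j : Fin m → ℕ), StrictMono i → StrictMono j →
    QNonneg (Matrix.det (Matrix.of fun a b => M (i a) (j b)))

/-! ### Closure properties of `q`-nonnegativity -/

lemma QNonneg.zero : QNonneg 0 := fun i => by simp

lemma QNonneg.one : QNonneg 1 := fun i => by
  rw [Polynomial.coeff_one]; split_ifs <;> norm_num

lemma QNonneg.mul {f g : Polynomial ℝ} (hf : QNonneg f) (hg : QNonneg g) : QNonneg (f * g) :=
  fun i => by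
    rw [Polynomial.coeff_mul]
    exact Finset.sum_nonneg fun x _ => mul_nonneg (hf _) (hg _)

lemma QNonneg.sum {ι : Type*} (S : Finset ι) {f : ι → Polynomial ℝ}
    (h : ∀ x ∈ S, QNonneg (f x)) : QNonneg (∑ x ∈ S, f x) := fun i => by
  rw [Polynomial.finsetSum_coeff]
  exact Finset.sum_nonneg fun x hx => h x hx i

lemma QNonneg.prod {ι : Type*} (S : Finset ι) {f : ι → Polynomial ℝ}
    (h : ∀ x ∈ S, QNonneg (f x)) : QNonneg (∏ x ∈ S, f x) :=
  Finset.prod_induction f QNonneg (fun _ _ => QNonneg.mul) QNonneg.one h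

lemma QNonneg.of_nsmul {n : ℕ} (hn : 0 < n) {f : Polynomial ℝ} (h : QNonneg (n • f)) :
    QNonneg f := fun i => by
  have := h i
  rw [Polynomial.coeff_smul, nsmul_eq_mul] at this
  exact nonneg_of_mul_nonneg_right this (by exact_mod_cast hn)

/-! ### Determinants and the Cauchy–Binet formula -/

section Det

variable {R : Type*} [CommRing R]

/-- Expansion of a determinant whose rows are linear combinations, by multilinearity. -/
lemma det_sum_rows {m : ℕ} {κ : Type*} [Fintype κ] (w : Fin m → κ → R)
    (v : Fin m → κ → Fin m → R) :
    Matrix.det (Matrix.of fun a b => ∑ k, w a k * v a k b) =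
      ∑ f : Fin m → κ, (∏ a, w a (f a)) * Matrix.det (Matrix.of fun a b => v a (f a) b) := by
  classical
  have h := (Matrix.detRowAlternating (n := Fin m) (R := R)).toMultilinearMap.map_sum
    (fun a (k : κ) => w a k • v a k)
  have h2 : ∀ f : Fin m → κ, _ :=
    fun f => (Matrix.detRowAlternating (n := Fin m) (R := R)).toMultilinearMap.map_smul_univ
      (fun a => w a (f a)) (fun a => v a (f a))
  simp only [h2] at h
  convert h using 1
  · congr 1
    ext a b
    simp
  · rfl

lemma det_of_row_zero {m : ℕ} (M : Matrix (Fin (m + 1)) (Fin (m + 1)) R)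
    (h : ∀ b : Fin m, M 0 b.succ = 0) :
    M.det = M 0 0 * Matrix.det (M.submatrix Fin.succ Fin.succ) := by
  rw [Matrix.det_succ_row_zero, Fin.sum_univ_succ]
  simp [h, Fin.succAbove_zero]

lemma det_of_col_zero {m : ℕ} (M : Matrix (Fin (m + 1)) (Fin (m + 1)) R)
    (h : ∀ a : Fin m, M a.succ 0 = 0) :
    M.det = M 0 0 * Matrix.det (M.submatrix Fin.succ Fin.succ) := by
  rw [Matrix.det_succ_column_zero, Fin.sum_univ_succ]
  simp [h, Fin.succAbove_zero]

/-- The Cauchy–Binet formula in symmetrized form: the sum runs over all index maps instead of the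
strictly increasing ones, so each minor product is counted `m!` times. -/
lemma factorial_smul_det_mul {m N : ℕ} (A : Fin m → Fin N → R) (B : Fin N → Fin m → R) :
    m.factorial • Matrix.det (Matrix.of fun a b => ∑ k, A a k * B k b) =
      ∑ f : Fin m → Fin N, Matrix.det (Matrix.of fun a b => A a (f b)) *
        Matrix.det (Matrix.of fun a b => B (f a) b) := by
  rw [det_sum_rows A (fun _ k b => B k b)]
  set F : (Fin m → Fin N) → R := fun f =>
    (∏ a, A a (f a)) * Matrix.det (Matrix.of fun a b => B (f a) b) with hF
  have h1 : ∀ σ : Equiv.Perm (Fin m), ∑ f, F (f ∘ σ) = ∑ f, F f := fun σ =>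
    Equiv.sum_comp (Equiv.arrowCongr σ.symm (Equiv.refl (Fin N))) F
  have h2 : ∑ σ : Equiv.Perm (Fin m), ∑ f, F (f ∘ σ) = m.factorial • ∑ f, F f := by
    simp [h1, Finset.card_univ, Fintype.card_perm]
  rw [← h2, Finset.sum_comm]
  refine Finset.sum_congr rfl fun f _ => ?_
  rw [← Matrix.det_transpose (Matrix.of fun a b => A a (f b)), Matrix.det_apply', Finset.sum_mul]
  refine Finset.sum_congr rfl fun σ _ => ?_
  have h3 := Matrix.det_permute σ (Matrix.of fun a b => B (f a) b)
  have h4 : (Matrix.of fun a b => B ((f ∘ σ) a) b) =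
    (Matrix.of fun a b => B (f a) b).submatrix σ id := rfl
  simp only [hF]
  rw [h4, h3]
  simp only [Matrix.transpose_apply, Matrix.of_apply, Function.comp]
  ring

end Det

/-- Minors of a product are `q`-nonnegative when the maximal minors of both factors are. -/
lemma qNonneg_det_mul {m N : ℕ} (A : Fin m → Fin N → Polynomial ℝ)
    (B : Fin N → Fin m → Polynomial ℝ)
    (hA : ∀ g : Fin m → Fin N, StrictMono g →
      QNonneg (Matrix.det (Matrix.of fun a b => A a (g b))))
    (hB : ∀ g : Fin m → Fin N, StrictMono g →
      QNonneg (Matrix.det (Matrix.of fun a b => B (g a) b))) :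
    QNonneg (Matrix.det (Matrix.of fun a b => ∑ k, A a k * B k b)) := by
  refine QNonneg.of_nsmul (Nat.factorial_pos m) ?_
  rw [factorial_smul_det_mul]
  refine QNonneg.sum _ fun f _ => ?_
  by_cases hf : Function.Injective f
  -- Sorting `f` changes both determinants by the same sign.
  · set σ := Tuple.sort f
    have hg : StrictMono (f ∘ σ) :=
      (Tuple.monotone_sort f).strictMono_of_injective (hf.comp σ.injective)
    have h1 := hA _ hg
    have h2 := hB _ hg
    have e1 : (Matrix.of fun a b => A a ((f ∘ σ) b)) =
      (Matrix.of fun a b => A a (f b)).submatrix id σ := rfl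
    have e2 : (Matrix.of fun a b => B ((f ∘ σ) a) b) =
      (Matrix.of fun a b => B (f a) b).submatrix σ id := rfl
    rw [e1, Matrix.det_permute'] at h1
    rw [e2, Matrix.det_permute] at h2
    have h := h1.mul h2
    rcases Int.units_eq_one_or (Equiv.Perm.sign σ) with hs | hs <;> simpa [hs] using h
  · obtain ⟨x, y, hxy, hne⟩ : ∃ x y, f x = f y ∧ x ≠ y := by
      simpa [Function.Injective] using hf
    rw [Matrix.det_zero_of_row_eq (M := Matrix.of fun a b => B (f a) b) hne
      (by ext b; simp [hxy]), mul_zero]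
    exact QNonneg.zero

lemma QTP.det {M : ℕ → ℕ → Polynomial ℝ} (h : QTP M) {m : ℕ} (i j : Fin m → ℕ)
    (hi : StrictMono i) (hj : StrictMono j) :
    QNonneg (Matrix.det (Matrix.of fun a b => M (i a) (j b))) := by
  rcases Nat.eq_zero_or_pos m with rfl | hm
  · rw [Matrix.det_isEmpty]; exact QNonneg.one
  · exact h m hm i j hi hj

lemma QTP.transpose {M : ℕ → ℕ → Polynomial ℝ} (h : QTP M) : QTP fun k l => M l k := by
  intro m hm i j hi hj
  have := h m hm j i hj hi
  rwa [← Matrix.det_transpose] at this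

/-! ### Total positivity of the tridiagonal matrix -/

/-- The 0-1 matrix with rows `e 0, e 0 + e 1, e 1, e 1 + e 2, e 2, …`: row `2 * k` is `e k` and row
`2 * k + 1` is `e k + e (k + 1)`. -/
noncomputable def stair (x k : ℕ) : Polynomial ℝ := if x ≤ 2 * k + 1 ∧ 2 * k ≤ x + 1 then 1 else 0

/-- Minors of `stair` are nonnegative, even with repeated rows: expand along the first row when it
has a single nonzero entry, along the first column when that has a single nonzero entry; otherwise
two rows are equal. -/
lemma qNonneg_det_stair : ∀ (m : ℕ) (x j : Fin m → ℕ), Monotone x → StrictMono j →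
    QNonneg (Matrix.det (Matrix.of fun a b => stair (x a) (j b)))
  | 0, _, _, _, _ => by rw [Matrix.det_isEmpty]; exact QNonneg.one
  | m + 1, x, j, hx, hj => by
    have ih := qNonneg_det_stair m (x ∘ Fin.succ) (j ∘ Fin.succ)
      (hx.comp (Fin.strictMono_succ).monotone) (hj.comp Fin.strictMono_succ)
    have h00 : QNonneg (stair (x 0) (j 0)) := by
      unfold stair; split_ifs
      exacts [QNonneg.one, QNonneg.zero]
    by_cases hrow : ∀ b : Fin m, stair (x 0) (j b.succ) = 0
    · rw [det_of_row_zero _ hrow]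
      exact h00.mul ih
    by_cases hcol : ∀ a : Fin m, stair (x a.succ) (j 0) = 0
    · rw [det_of_col_zero _ hcol]
      exact h00.mul ih
    push Not at hrow hcol
    obtain ⟨b, hb⟩ := hrow
    obtain ⟨a, ha⟩ := hcol
    have hb' : x 0 ≤ 2 * j b.succ + 1 ∧ 2 * j b.succ ≤ x 0 + 1 := by
      by_contra h; exact hb (if_neg h)
    have ha' : x a.succ ≤ 2 * j 0 + 1 ∧ 2 * j 0 ≤ x a.succ + 1 := by
      by_contra h; exact ha (if_neg h)
    have h1 : j 0 < j b.succ := hj (Fin.succ_pos b)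
    have h2 : x 0 ≤ x a.succ := hx (Fin.zero_le _)
    have h3 : x 0 = x a.succ := by omega
    rw [Matrix.det_zero_of_row_eq (Fin.succ_ne_zero a).symm (by ext b; simp [h3])]
    exact QNonneg.zero

/-- The tridiagonal matrix with `(k, k + 1)` entry `r k`, `(k, k)` entry `s k` and
`(k, k - 1)` entry `t k`. -/
noncomputable def tri (r s t : ℕ → Polynomial ℝ) (k l : ℕ) : Polynomial ℝ :=
  (if k + 1 = l then r k else 0) + (if k = l then s k else 0) + (if k = l + 1 then t k else 0)

lemma qtp_tri (r s t : ℕ → Polynomial ℝ) (hr : ∀ k, QNonneg (r k))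
    (ht : ∀ k, 1 ≤ k → QNonneg (t k)) (h0 : QNonneg (s 0 - r 0))
    (hd : ∀ k, 1 ≤ k → QNonneg (s k - (r k + t k))) : QTP (tri r s t) := by
  intro m _ i j hi hj
  let w : ℕ → Fin 3 → Polynomial ℝ := fun k =>
    if k = 0 then ![0, s 0 - r 0, r 0] else ![t k, s k - (r k + t k), r k]
  have hw : ∀ k e, QNonneg (w k e) := by
    intro k e
    by_cases hk : k = 0
    · subst hk
      fin_cases e
      exacts [QNonneg.zero, h0, hr 0]
    · have hk1 : 1 ≤ k := by omega
      fin_cases e <;> simp only [w, if_neg hk]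
      exacts [ht k hk1, hd k hk1, hr k]
  -- For `k = 0`, `e = 0` the index `2 * k + e - 1` is truncated, but the weight vanishes.
  have key : ∀ k l, tri r s t k l = ∑ e : Fin 3, w k e * stair (2 * k + e - 1) l := by
    intro k l
    rw [Fin.sum_univ_three]
    by_cases hk : k = 0
    · subst hk
      simp only [w, tri, stair, if_true]
      by_cases hl0 : l = 0
      · subst hl0; simp
      by_cases hl1 : l = 1
      · subst hl1; simp
      simp [show ¬ (0 = l) by omega, show ¬ (1 = l) by omega, show ¬ (2 * l ≤ 1) by omega,
        show ¬ (2 * l ≤ 2) by omega, hl0]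
    · obtain ⟨k, rfl⟩ := Nat.exists_eq_succ_of_ne_zero hk
      simp only [w, if_neg hk, tri, stair]
      rcases lt_trichotomy l (k + 1) with h | h | h
      · by_cases hl : l = k
        · subst hl
          simp [show 2 * (l + 1) - 1 = 2 * l + 1 by omega,
            show ¬ (2 * (l + 1) ≤ 2 * l) by omega, show ¬ (l + 1 + 1 = l) by omega,
            show ¬ (2 * (l + 1) ≤ 2 * l + 1) by omega, show 2 * l ≤ 2 * l + 1 + 1 by omega]
        · simp [show ¬ (k + 1 + 1 = l) by omega, show ¬ (k + 1 = l) by omega,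
            show ¬ (k = l) by omega, show ¬ (2 * (k + 1) - 1 ≤ 2 * l + 1) by omega,
            show ¬ (2 * (k + 1) ≤ 2 * l + 1) by omega, show ¬ (2 * (k + 1) ≤ 2 * l) by omega]
      · subst h
        simp [show 2 * (k + 1) - 1 ≤ 2 * (k + 1) + 1 by omega,
            show 2 * (k + 1) ≤ 2 * (k + 1) - 1 + 1 by omega,
            show 2 * (k + 1) ≤ 2 * (k + 1) + 1 + 1 by omega]
        ring
      · by_cases hl : l = k + 2
        · subst hl
          simp [show ¬ (2 * (k + 2) ≤ 2 * (k + 1) - 1 + 1) by omega,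
            show ¬ (2 * (k + 2) ≤ 2 * (k + 1) + 1) by omega,
            show (2 * (k + 2) ≤ 2 * (k + 1) + 1 + 1) by omega,
            show (2 * (k + 1) ≤ 2 * (k + 2)) by omega]
        · simp [show ¬ (k + 1 + 1 = l) by omega, show ¬ (k + 1 = l) by omega,
            show ¬ (k = l) by omega, show ¬ (2 * l ≤ 2 * (k + 1) - 1 + 1) by omega,
            show ¬ (2 * l ≤ 2 * (k + 1) + 1) by omega,
            show ¬ (2 * l ≤ 2 * (k + 1) + 1 + 1) by omega]
  simp only [key]
  rw [det_sum_rows (fun a e => w (i a) e) (fun a (e : Fin 3) b => stair (2 * i a + e - 1) (j b))]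
  refine QNonneg.sum _ fun f _ => (QNonneg.prod _ fun a _ => hw _ _).mul ?_
  refine qNonneg_det_stair m (fun a => 2 * i a + f a - 1) j ?_ hj
  intro a b hab
  rcases hab.eq_or_lt with rfl | hab
  · exact le_rfl
  · have h1 := hi hab
    have h2 := (f a).isLt
    have h3 := (f b).isLt
    change 2 * i a + (f a : ℕ) - 1 ≤ 2 * i b + (f b : ℕ) - 1
    omega

/-! ### Catalan–Stieltjes matrices -/

/-- Row `n + 1` of a Catalan–Stieltjes matrix is row `n` times the tridiagonal matrix; the sum is
truncated at any `N > n`. -/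
lemma succ_eq_sum_tri {r s t : ℕ → Polynomial ℝ} {c : ℕ → ℕ → Polynomial ℝ}
    (hupper : ∀ n k, n < k → c n k = 0)
    (hrec0 : ∀ n, c (n + 1) 0 = s 0 * c n 0 + t 1 * c n 1)
    (hrec : ∀ n k, c (n + 1) (k + 1) =
      r k * c n k + s (k + 1) * c n (k + 1) + t (k + 2) * c n (k + 2))
    {n N : ℕ} (hN : n < N) (l : ℕ) :
    c (n + 1) l = ∑ k : Fin N, c n k * tri r s t k l := by
  rw [Fin.sum_univ_eq_sum_range (fun k => c n k * tri r s t k l) N]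
  have hz : ∀ (k : ℕ) (p : Polynomial ℝ), (if k < N then c n k * p else 0) = c n k * p := by
    intro k p
    split_ifs with h
    · rfl
    · rw [hupper n k (by omega), zero_mul]
  simp only [tri, mul_add, Finset.sum_add_distrib, mul_ite, mul_zero]
  cases l with
  | zero =>
    rw [hrec0]
    simp [hz]
    ring
  | succ l =>
    rw [hrec]
    simp [hz]
    ring

lemma qtp_of_recurrence {r s t : ℕ → Polynomial ℝ} {c : ℕ → ℕ → Polynomial ℝ}
    (hc00 : c 0 0 = 1) (hupper : ∀ n k, n < k → c n k = 0)
    (hsum : ∀ n N l, n < N → c (n + 1) l = ∑ k : Fin N, c n k * tri r s t k l)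
    (hJ : QTP (tri r s t)) : QTP c := by
  -- Induction on the size, then on a bound for the row indices.
  have main : ∀ m L : ℕ, ∀ i j : Fin m → ℕ, (∀ a, i a < L) → StrictMono i → StrictMono j →
      QNonneg (Matrix.det (Matrix.of fun a b => c (i a) (j b))) := by
    intro m
    induction m with
    | zero => intro L i j _ _ _; rw [Matrix.det_isEmpty]; exact QNonneg.one
    | succ m ihm =>
      intro L
      induction L with
      | zero => intro i j h; exact absurd (h 0) (Nat.not_lt_zero _)
      | succ L ihL =>
        intro i j hiL hi hj
        by_cases hi0 : i 0 = 0
        -- Row `0` of `c` is `e 0`.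
        · rw [det_of_row_zero]
          · refine QNonneg.mul ?_ (ihm (L + 1) (i ∘ Fin.succ) (j ∘ Fin.succ) (fun a => hiL _)
              (hi.comp Fin.strictMono_succ) (hj.comp Fin.strictMono_succ))
            change QNonneg (c (i 0) (j 0))
            rw [hi0]
            rcases Nat.eq_zero_or_pos (j 0) with h | h
            · rw [h, hc00]; exact QNonneg.one
            · rw [hupper _ _ h]; exact QNonneg.zero
          · intro b
            change c (i 0) (j b.succ) = 0
            rw [hi0]
            exact hupper _ _ (lt_of_le_of_lt (Nat.zero_le _) (hj (Fin.succ_pos b)))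
        · have hpos : ∀ a, 0 < i a := fun a =>
            lt_of_lt_of_le (Nat.pos_of_ne_zero hi0) (hi.monotone (Fin.zero_le a))
          have hrow : (Matrix.of fun a b => c (i a) (j b)) =
              Matrix.of fun a b => ∑ k : Fin L, c (i a - 1) k * tri r s t k (j b) := by
            ext1 a b
            have h1 := hiL a
            have h2 := hpos a
            have := hsum (i a - 1) L (j b) (by omega)
            rwa [Nat.sub_add_cancel h2] at this
          rw [hrow]
          refine qNonneg_det_mul (fun a (k : Fin L) => c (i a - 1) k)
            (fun (k : Fin L) b => tri r s t k (j b)) ?_ ?_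
          · intro g hg
            refine ihL (fun a => i a - 1) (fun b => g b) ?_ ?_ hg
            · intro a
              have h1 := hiL a
              have h2 := hpos a
              change i a - 1 < L
              omega
            · intro a b hab
              have h1 := hi hab
              have h2 := hpos a
              change i a - 1 < i b - 1
              omega
          · intro g hg
            exact hJ.det (fun a => g a) j hg hj
  intro m _ i j hi hj
  exact main m (∑ a, i a + 1) i j (fun a => Nat.lt_succ_of_le
    (Finset.single_le_sum (f := i) (fun _ _ => Nat.zero_le _) (Finset.mem_univ a))) hi hj

/-- The Catalan–Stieltjes matrix of given sequences. -/
noncomputable def csMatrix (r s t : ℕ → Polynomial ℝ) : ℕ → ℕ → Polynomial ℝ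
  | 0, 0 => 1
  | 0, _ + 1 => 0
  | n + 1, 0 => s 0 * csMatrix r s t n 0 + t 1 * csMatrix r s t n 1
  | n + 1, k + 1 => r k * csMatrix r s t n k + s (k + 1) * csMatrix r s t n (k + 1) +
      t (k + 2) * csMatrix r s t n (k + 2)

lemma csMatrix_upper (r s t : ℕ → Polynomial ℝ) :
    ∀ n k, n < k → csMatrix r s t n k = 0
  | 0, k + 1, _ => by rw [csMatrix]
  | n + 1, k + 1, h => by
    rw [csMatrix, csMatrix_upper r s t n k (by omega), csMatrix_upper r s t n (k + 1) (by omega),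
      csMatrix_upper r s t n (k + 2) (by omega)]
    simp

/-- The transpose of a tridiagonal matrix exchanges `r k` and `t (k + 1)`. -/
lemma tri_transpose (r s t : ℕ → Polynomial ℝ) (k l : ℕ) :
    tri (fun k => t (k + 1)) s (fun k => r (k - 1)) k l = tri r s t l k := by
  unfold tri
  have e1 : (if k + 1 = l then t (k + 1) else 0) = if l = k + 1 then t l else 0 := by
    by_cases h : l = k + 1
    · subst h; simp
    · rw [if_neg h, if_neg (Ne.symm h)]
  have e2 : (if k = l then s k else 0) = if l = k then s l else 0 := by
    by_cases h : l = k
    · subst h; simp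
    · rw [if_neg h, if_neg (Ne.symm h)]
  have e3 : (if k = l + 1 then r (k - 1) else 0) = if l + 1 = k then r l else 0 := by
    by_cases h : l + 1 = k
    · subst h; simp
    · rw [if_neg h, if_neg (Ne.symm h)]
  rw [e1, e2, e3]
  ring

theorem stmt0 (r s t : ℕ → Polynomial ℝ) (c : ℕ → ℕ → Polynomial ℝ)
    (hr : ∀ k, QNonneg (r k)) (hs : ∀ k, QNonneg (s k)) (ht : ∀ k, 1 ≤ k → QNonneg (t k))
    (hc00 : c 0 0 = 1)
    (hupper : ∀ n k, n < k → c n k = 0)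
    (hrec0 : ∀ n, c (n + 1) 0 = s 0 * c n 0 + t 1 * c n 1)
    (hrec : ∀ n k, c (n + 1) (k + 1) =
      r k * c n k + s (k + 1) * c n (k + 1) + t (k + 2) * c n (k + 2))
    (hcond : (QNonneg (s 0 - r 0) ∧ ∀ k, 1 ≤ k → QNonneg (s k - (r k + t k)))) :
    QTP c ∧ QTP (fun i j => c (i + j) 0) := by
  have hJ : QTP (tri r s t) := qtp_tri r s t hr ht hcond.1 hcond.2
  have hsum : ∀ n N l, n < N → c (n + 1) l = ∑ k : Fin N, c n k * tri r s t k l :=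
    fun n N l h => succ_eq_sum_tri hupper hrec0 hrec h l
  have hc : QTP c := qtp_of_recurrence hc00 hupper hsum hJ
  refine ⟨hc, ?_⟩
  -- `B j k` is the `(k, 0)` entry of the `j`-th power of the tridiagonal matrix.
  set B := csMatrix (fun k => t (k + 1)) s (fun k => r (k - 1)) with hBdef
  have hBupper : ∀ n k, n < k → B n k = 0 := csMatrix_upper _ _ _
  have hBsum' : ∀ n N l, n < N → B (n + 1) l =
      ∑ k : Fin N, B n k * tri (fun k => t (k + 1)) s (fun k => r (k - 1)) k l :=
    fun n N l h => succ_eq_sum_tri hBupper (fun n => by rw [hBdef, csMatrix])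
      (fun n k => by rw [hBdef, csMatrix]) h l
  have hB00 : B 0 0 = 1 := by rw [hBdef, csMatrix]
  have hB : QTP B := by
    refine qtp_of_recurrence hB00 hBupper hBsum' ?_
    have := hJ.transpose
    rwa [show (fun k l => tri r s t l k) = tri (fun k => t (k + 1)) s (fun k => r (k - 1)) from
      funext fun k => funext fun l => (tri_transpose r s t k l).symm] at this
  have hBsum : ∀ n N l, n < N → B (n + 1) l = ∑ k : Fin N, tri r s t l k * B n k := by
    intro n N l h
    rw [hBsum' n N l h]
    exact Finset.sum_congr rfl fun k _ => by rw [tri_transpose, mul_comm]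
  have hprod : ∀ N j i, i + j < N → c (i + j) 0 = ∑ k : Fin N, c i k * B j k := by
    intro N j
    induction j with
    | zero =>
      intro i hi
      rw [Finset.sum_eq_single (⟨0, by omega⟩ : Fin N)]
      · simp [hB00]
      · intro k _ hk
        have : 0 < (k : ℕ) := Nat.pos_of_ne_zero fun h => hk (Fin.ext h)
        rw [hBupper 0 k this, mul_zero]
      · intro h; exact absurd (Finset.mem_univ _) h
    | succ j ih =>
      intro i hi
      -- Move one factor of the tridiagonal matrix from `B` to `c`.
      have h1 := ih (i + 1) (by omega)
      rw [show i + (j + 1) = i + 1 + j by omega, h1]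
      simp only [hsum i N _ (show i < N by omega), hBsum j N _ (show j < N by omega),
        Finset.sum_mul, Finset.mul_sum]
      rw [Finset.sum_comm]
      simp only [mul_assoc]
  intro m _ i j hi hj
  set N := ∑ a, i a + ∑ b, j b + 1 with hN
  have hmat : (Matrix.of fun a b => c (i a + j b) 0) =
      Matrix.of fun a b => ∑ k : Fin N, c (i a) k * B (j b) k := by
    ext1 a b
    have h1 := Finset.single_le_sum (f := i) (fun _ _ => Nat.zero_le _) (Finset.mem_univ a)
    have h2 := Finset.single_le_sum (f := j) (fun _ _ => Nat.zero_le _) (Finset.mem_univ b)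
    exact hprod N (j b) (i a) (by omega)
  rw [hmat]
  refine qNonneg_det_mul (fun a (k : Fin N) => c (i a) k) (fun (k : Fin N) b => B (j b) k) ?_ ?_
  · intro g hg
    exact hc.det i (fun b => g b) hi hg
  · intro g hg
    exact hB.transpose.det (fun a => g a) j hg hj
end

section
/- Suppose the sequences γ = (r_k)_{k≥0}, σ = (s_k)_{k≥0}, τ = (t_k)_{k≥1} of q-nonnegative polynomials satisfy s_0 ≥_q 1 and s_k ≥_q r_{k−1}·t_k + 1 for all k ≥ 1. Then both the Catalan–Stieltjes matrix C^{γ,σ,τ} and the Hankel matrix H^{γ,σ,τ} are q-totally positive. -/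
/-!
The matrix `J` with superdiagonal `r`, diagonal `s` and subdiagonal `t` sends row `n` of `C` to
row `n + 1`. Writing `s_k = r_{k-1} t_k + 1 + e_k` with `e_k ≥_q 0`, `J` factors as the weight
matrix of a planar network with two layers: the middle vertices are `2k + 1` (the middle vertex of
the bidiagonal factorization with unit diagonals) and `2k` (a bypass of weight `e_k` joining source
`k` to sink `k`). In each of the two factors consecutive columns are supported on intervals that
share at most an endpoint, so by multilinearity right multiplication by such a factor preserves
nonnegativity of all maximal minors (`PosMinors.interval`, `PosMinors.step`).

Total positivity of `C` follows by induction on the first row index of a minor: if it is positive,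
the minor is one of (shifted rows) times `J`; if it is zero, the first row is `e_0`, and one
expands along it.

For the Hankel matrix, `H = C Aᵀ`, where `A` is the Catalan–Stieltjes matrix with the roles of `r`
and `t` exchanged. It satisfies the same hypotheses, so `A` is totally positive too, and a
symmetrized Cauchy–Binet formula (`factorial_mul_det`) concludes.
-/

open Polynomial

/-! ### Nonnegative maximal minors -/

/-- The subsemiring of polynomials with nonnegative coefficients. -/
def qNonnegSubsemiring : Subsemiring (Polynomial ℝ) where
  carrier := {f | QNonneg f}
  zero_mem' := fun i => by simp
  one_mem' := fun i => by
    rw [coeff_one]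
    split_ifs <;> norm_num
  add_mem' := fun {f g} hf hg i => by
    rw [coeff_add]
    exact add_nonneg (hf i) (hg i)
  mul_mem' := fun {f g} hf hg i => by
    rw [coeff_mul]
    exact Finset.sum_nonneg fun p _ => mul_nonneg (hf _) (hg _)

lemma mem_qNonneg {f : Polynomial ℝ} : f ∈ qNonnegSubsemiring ↔ QNonneg f := Iff.rfl

/-- The sequence of vectors `x 0, x 1, …` has `q`-nonnegative maximal minors: the determinant of
any `m` of its members, taken in increasing order, is `q`-nonnegative. The members `x k` are
thought of as the columns of a matrix with `m` rows. -/
def PosMinors {m : ℕ} (x : ℕ → Fin m → Polynomial ℝ) : Prop :=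
  ∀ j : Fin m → ℕ, StrictMono j → Matrix.det (Matrix.of fun a => x (j a)) ∈ qNonnegSubsemiring

lemma PosMinors.monotone {m : ℕ} {x : ℕ → Fin m → Polynomial ℝ} (hx : PosMinors x)
    {j : Fin m → ℕ} (hj : Monotone j) :
    Matrix.det (Matrix.of fun a => x (j a)) ∈ qNonnegSubsemiring := by
  by_cases hi : Function.Injective j
  · exact hx j (hj.strictMono_of_injective hi)
  · simp only [Function.Injective, not_forall] at hi
    obtain ⟨a, b, hab, hne⟩ := hi
    rw [Matrix.det_zero_of_row_eq hne (by ext k; simp [hab])]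
    exact zero_mem _

/-- Multilinear expansion of a determinant whose rows are linear combinations. -/
lemma det_sum_expand {m : ℕ} (x : ℕ → Fin m → Polynomial ℝ) (S : Fin m → Finset ℕ)
    (a : Fin m → ℕ → Polynomial ℝ) :
    Matrix.det (Matrix.of fun b => ∑ k ∈ S b, a b k • x k) =
      ∑ f ∈ Fintype.piFinset S, (∏ b, a b (f b)) * Matrix.det (Matrix.of fun b => x (f b)) := by
  have h := (Matrix.detRowAlternating (n := Fin m) (R := Polynomial ℝ)).toMultilinearMap.map_sum_finset
    (fun b k => a b k • x k) S
  refine h.trans (Finset.sum_congr rfl fun f _ => ?_)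
  exact (Matrix.detRowAlternating (n := Fin m)
    (R := Polynomial ℝ)).toMultilinearMap.map_smul_univ (fun b => a b (f b)) (fun b => x (f b))

/-- If each `y j` is a `q`-nonnegative combination of the `x k` with `k ∈ S j`, and the sets `S j`
move weakly to the right as `j` increases, every term in the multilinear expansion of a minor of
`y` is a nonnegative multiple of a minor of `x` with weakly increasing indices. -/
lemma PosMinors.interval {m : ℕ} {x y : ℕ → Fin m → Polynomial ℝ} (hx : PosMinors x)
    (S : ℕ → Finset ℕ) (a : ℕ → ℕ → Polynomial ℝ)
    (ha : ∀ j, ∀ k ∈ S j, a j k ∈ qNonnegSubsemiring)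
    (hS : ∀ j j', j < j' → ∀ k ∈ S j, ∀ k' ∈ S j', k ≤ k')
    (hy : ∀ j, y j = ∑ k ∈ S j, a j k • x k) : PosMinors y := by
  intro j hj
  simp only [hy]
  rw [det_sum_expand x (fun b => S (j b)) (fun b => a (j b))]
  refine sum_mem fun f hf => ?_
  rw [Fintype.mem_piFinset] at hf
  refine mul_mem (prod_mem fun b _ => ha _ _ (hf b)) (hx.monotone ?_)
  intro b₁ b₂ hb
  rcases hb.eq_or_lt with rfl | hlt
  · exact le_rfl
  · exact hS _ _ (hj hlt) _ (hf b₁) _ (hf b₂)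

/-! ### Multiplication by the tridiagonal matrix -/

/-- Right multiplication by the tridiagonal matrix preserves nonnegativity of maximal minors. -/
lemma PosMinors.step {m : ℕ} {r s t : ℕ → Polynomial ℝ} (hr : ∀ k, QNonneg (r k))
    (ht : ∀ k, 1 ≤ k → QNonneg (t k)) (h0 : QNonneg (s 0 - 1))
    (h1 : ∀ k, 1 ≤ k → QNonneg (s k - (r (k - 1) * t k + 1)))
    {x y : ℕ → Fin m → Polynomial ℝ} (hx : PosMinors x)
    (hy0 : y 0 = s 0 • x 0 + t 1 • x 1)
    (hy : ∀ k, y (k + 1) = r k • x k + s (k + 1) • x (k + 1) + t (k + 2) • x (k + 2)) :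
    PosMinors y := by
  -- the bypass weights
  let e : ℕ → Polynomial ℝ := fun k => if k = 0 then s 0 - 1 else s k - (r (k - 1) * t k + 1)
  have he : ∀ k, e k ∈ qNonnegSubsemiring := fun k => by
    by_cases hk : k = 0
    · simpa [e, hk] using mem_qNonneg.2 h0
    · simpa [e, hk] using mem_qNonneg.2 (h1 k (by omega))
  let S : ℕ → Finset ℕ := fun k => Finset.Icc (k / 2) ((k + 1) / 2)
  let a : ℕ → ℕ → Polynomial ℝ := fun k l =>
    if k % 2 = 0 then e (k / 2) else if l = k / 2 then 1 else t l
  let w : ℕ → Fin m → Polynomial ℝ := fun k => ∑ l ∈ S k, a k l • x l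
  have hw : PosMinors w := by
    refine hx.interval S a ?_ ?_ fun _ => rfl
    · intro j k hk
      simp only [S, Finset.mem_Icc] at hk
      simp only [a]
      split_ifs with h h'
      · exact he _
      · exact one_mem _
      · exact ht k (by omega)
    · intro j j' hj k hk k' hk'
      simp only [S, Finset.mem_Icc] at hk hk'
      omega
  have hwe : ∀ k, w (2 * k) = e k • x k := fun k => by
    have h2 : (2 * k + 1) / 2 = k := by omega
    simp [w, S, a, h2]
  have hwo : ∀ k, w (2 * k + 1) = x k + t (k + 1) • x (k + 1) := fun k => by
    have h2 : (2 * k + 1) / 2 = k := by omega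
    have h3 : (2 * k + 1 + 1) / 2 = k + 1 := by omega
    have h4 : (2 * k + 1) % 2 = 1 := by omega
    have h5 : Finset.Icc k (k + 1) = {k, k + 1} := by ext; simp; omega
    simp [w, S, a, h2, h3, h4, h5]
  refine hw.interval (fun k => Finset.Icc (2 * k - 1) (2 * k + 1))
    (fun k l => if l + 1 = 2 * k then r (k - 1) else 1) ?_ ?_ ?_
  · intro j k _
    split_ifs
    · exact hr _
    · exact one_mem _
  · intro j j' hj k hk k' hk'
    simp only [Finset.mem_Icc] at hk hk'
    omega
  · rintro (_ | k)
    · have h5 : Finset.Icc (2 * 0 - 1) (2 * 0 + 1) = {0, 1} := by decide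
      have hw0 := hwe 0
      have hw1 := hwo 0
      simp only [mul_zero, zero_add] at hw0 hw1
      rw [h5, Finset.sum_pair (by norm_num), hw0, hw1, hy0]
      ext1 b
      simp [e]
      ring
    · have h5 : Finset.Icc (2 * (k + 1) - 1) (2 * (k + 1) + 1) =
          {2 * k + 1, 2 * (k + 1), 2 * (k + 1) + 1} := by ext; simp; omega
      rw [h5, Finset.sum_insert (by simp; omega), Finset.sum_pair (by omega), hwe, hwo, hwo, hy]
      ext1 b
      simp [e, mul_add, add_assoc]
      ring

/-- Every finite set of rows of a Catalan–Stieltjes matrix has `q`-nonnegative maximal minors. -/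
lemma posMinors_stieltjes {r s t : ℕ → Polynomial ℝ} {c : ℕ → ℕ → Polynomial ℝ}
    (hr : ∀ k, QNonneg (r k)) (ht : ∀ k, 1 ≤ k → QNonneg (t k))
    (hc00 : c 0 0 = 1) (hupper : ∀ k, 0 < k → c 0 k = 0)
    (hrec0 : ∀ n, c (n + 1) 0 = s 0 * c n 0 + t 1 * c n 1)
    (hrec : ∀ n k, c (n + 1) (k + 1) =
      r k * c n k + s (k + 1) * c n (k + 1) + t (k + 2) * c n (k + 2))
    (h0 : QNonneg (s 0 - 1)) (h1 : ∀ k, 1 ≤ k → QNonneg (s k - (r (k - 1) * t k + 1)))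
    (m : ℕ) (i : Fin m → ℕ) (hi : StrictMono i) : PosMinors (fun k a => c (i a) k) := by
  induction m with
  | zero =>
    intro j _
    rw [Matrix.det_isEmpty]
    exact one_mem _
  | succ m ihm =>
    obtain ⟨n, hn⟩ : ∃ n, i 0 = n := ⟨_, rfl⟩
    induction n generalizing i with
    | zero =>
      intro j hj
      rw [Matrix.det_succ_column_zero, Fin.sum_univ_succ, Finset.sum_eq_zero, add_zero]
      · refine mul_mem (mul_mem (by simp) ?_) ?_
        · simp only [Matrix.of_apply, hn]
          rcases Nat.eq_zero_or_pos (j 0) with h | h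
          · rw [h, hc00]
            exact one_mem _
          · rw [hupper _ h]
            exact zero_mem _
        · exact ihm (fun a => i a.succ) (hi.comp (Fin.strictMono_succ))
            (fun a => j a.succ) (hj.comp (Fin.strictMono_succ))
      · intro a _
        have : 0 < j a.succ := (Nat.zero_le _).trans_lt (hj (Fin.succ_pos a))
        simp [hn, hupper _ this]
    | succ n ih =>
      have hpos : ∀ a, i a = (i a - 1) + 1 := fun a => by
        have := hi.monotone (Fin.zero_le a)
        omega
      have hprev : PosMinors (fun k a => c (i a - 1) k) := by
        refine ih (fun a => i a - 1) (fun a b hab => ?_) (by simp [hn])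
        have := hi hab
        have := hpos a
        dsimp only
        omega
      refine hprev.step hr ht h0 h1 ?_ fun k => ?_
      · ext1 a
        rw [hpos a, hrec0]
        simp
      · ext1 a
        rw [hpos a, hrec]
        simp

/-! ### A symmetrized Cauchy–Binet formula -/

/-- A symmetrized Cauchy–Binet formula: the sum runs over all index functions, so that each
`m`-element set of indices is counted `m !` times. -/
lemma factorial_mul_det {m : ℕ} (x : ℕ → Fin m → Polynomial ℝ) (N : ℕ)
    (A : Fin m → ℕ → Polynomial ℝ) :
    (m.factorial : Polynomial ℝ) *
        Matrix.det (Matrix.of fun b => ∑ k ∈ Finset.range N, A b k • x k) =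
      ∑ f ∈ Fintype.piFinset (fun _ : Fin m => Finset.range N),
        Matrix.det (Matrix.of fun b => fun b' => A b' (f b)) *
          Matrix.det (Matrix.of fun b => x (f b)) := by
  rw [det_sum_expand]
  -- reindexing the expansion by a permutation `σ` of the index functions
  have key : ∀ σ : Equiv.Perm (Fin m),
      ∑ f ∈ Fintype.piFinset (fun _ : Fin m => Finset.range N),
        (∏ b, A b (f b)) * Matrix.det (Matrix.of fun b => x (f b)) =
      ∑ f ∈ Fintype.piFinset (fun _ : Fin m => Finset.range N),
        (((Equiv.Perm.sign σ : ℤ) : Polynomial ℝ) * ∏ b, A b (f (σ b))) *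
          Matrix.det (Matrix.of fun b => x (f b)) := by
    intro σ
    refine Finset.sum_bij' (fun f _ => f ∘ σ.symm) (fun f _ => f ∘ σ) ?_ ?_ ?_ ?_ ?_
    · intro f hf
      rw [Fintype.mem_piFinset] at hf ⊢
      exact fun a => hf _
    · intro f hf
      rw [Fintype.mem_piFinset] at hf ⊢
      exact fun a => hf _
    · intro f _
      ext; simp
    · intro f _
      ext; simp
    · intro f _
      have h := Matrix.det_permute σ (Matrix.of fun b => x ((f ∘ σ.symm) b))
      have h' : (Matrix.of fun b => x ((f ∘ σ.symm) b)).submatrix σ id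
          = Matrix.of fun b => x (f b) := by
        ext; simp
      rw [h'] at h
      rw [h]
      simp only [Function.comp_apply, Equiv.symm_apply_apply]
      ring
  have : (m.factorial : Polynomial ℝ) = ∑ _σ : Equiv.Perm (Fin m), 1 := by
    simp [Fintype.card_perm]
  rw [this, Finset.sum_mul]
  simp only [one_mul]
  rw [Finset.sum_congr rfl fun σ _ => key σ, Finset.sum_comm]
  refine Finset.sum_congr rfl fun f _ => ?_
  rw [← Finset.sum_mul, Matrix.det_apply' (Matrix.of fun b => fun b' => A b' (f b))]
  rfl

/-- Both determinants change by the sign of the permutation sorting `f`, so their product is that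
of two minors with increasing indices. -/
lemma PosMinors.det_mul_det_mem {m : ℕ} {x y : ℕ → Fin m → Polynomial ℝ} (hx : PosMinors x)
    (hy : PosMinors y) (f : Fin m → ℕ) :
    Matrix.det (Matrix.of fun b => y (f b)) * Matrix.det (Matrix.of fun b => x (f b)) ∈
      qNonnegSubsemiring := by
  have hmono : Monotone (f ∘ Tuple.sort f) := Tuple.monotone_sort f
  have h := mul_mem (hy.monotone hmono) (hx.monotone hmono)
  have hp : ∀ z : ℕ → Fin m → Polynomial ℝ,
      Matrix.det (Matrix.of fun b => z ((f ∘ Tuple.sort f) b)) =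
        ((Equiv.Perm.sign (Tuple.sort f) : ℤ) : Polynomial ℝ) *
          Matrix.det (Matrix.of fun b => z (f b)) := fun z =>
    Matrix.det_permute (Tuple.sort f) (Matrix.of fun b => z (f b))
  rw [hp, hp] at h
  have hs : ((Equiv.Perm.sign (Tuple.sort f) : ℤ) : Polynomial ℝ) *
      ((Equiv.Perm.sign (Tuple.sort f) : ℤ) : Polynomial ℝ) = 1 := by
    rw [← Int.cast_mul, Int.units_coe_mul_self, Int.cast_one]
  convert h using 1
  linear_combination (-(Matrix.det (Matrix.of fun b => y (f b)) *
    Matrix.det (Matrix.of fun b => x (f b)))) * hs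

/-! ### The factorization of the Hankel matrix -/

/-- The Catalan–Stieltjes matrix with the roles of `r` and `t` exchanged; its row `n` is the
column `0` of the `n`-th power of the tridiagonal matrix. -/
noncomputable def dualStieltjes (r s t : ℕ → Polynomial ℝ) : ℕ → ℕ → Polynomial ℝ
  | 0, 0 => 1
  | 0, _ + 1 => 0
  | n + 1, 0 => s 0 * dualStieltjes r s t n 0 + r 0 * dualStieltjes r s t n 1
  | n + 1, k + 1 => t (k + 1) * dualStieltjes r s t n k +
      s (k + 1) * dualStieltjes r s t n (k + 1) + r (k + 1) * dualStieltjes r s t n (k + 2)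

lemma dualStieltjes_eq_zero (r s t : ℕ → Polynomial ℝ) (n k : ℕ) (h : n < k) :
    dualStieltjes r s t n k = 0 := by
  induction n generalizing k with
  | zero =>
    obtain ⟨k, rfl⟩ : ∃ l, k = l + 1 := ⟨k - 1, by omega⟩
    rw [dualStieltjes]
  | succ n ih =>
    obtain ⟨k, rfl⟩ : ∃ l, k = l + 1 := ⟨k - 1, by omega⟩
    rw [dualStieltjes, ih k (by omega), ih (k + 1) (by omega), ih (k + 2) (by omega)]
    simp

/-- Moving one factor of the tridiagonal matrix across the pairing of rows of `C` with rows of its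
dual, with the boundary terms of the truncation at `N`. -/
lemma sum_pairing {r s t : ℕ → Polynomial ℝ} {c : ℕ → ℕ → Polynomial ℝ}
    (hrec0 : ∀ n, c (n + 1) 0 = s 0 * c n 0 + t 1 * c n 1)
    (hrec : ∀ n k, c (n + 1) (k + 1) =
      r k * c n k + s (k + 1) * c n (k + 1) + t (k + 2) * c n (k + 2)) (i j N : ℕ) :
    ∑ k ∈ Finset.range (N + 1), c (i + 1) k * dualStieltjes r s t j k +
        r N * c i N * dualStieltjes r s t j (N + 1) =
      ∑ k ∈ Finset.range (N + 1), c i k * dualStieltjes r s t (j + 1) k +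
        t (N + 1) * c i (N + 1) * dualStieltjes r s t j N := by
  induction N with
  | zero =>
    simp only [zero_add, Finset.sum_range_one, hrec0, dualStieltjes]
    ring
  | succ N ih =>
    rw [Finset.sum_range_succ _ (N + 1), Finset.sum_range_succ _ (N + 1), hrec, dualStieltjes]
    linear_combination ih

lemma hankel_eq_sum {r s t : ℕ → Polynomial ℝ} {c : ℕ → ℕ → Polynomial ℝ}
    (hrec0 : ∀ n, c (n + 1) 0 = s 0 * c n 0 + t 1 * c n 1)
    (hrec : ∀ n k, c (n + 1) (k + 1) =
      r k * c n k + s (k + 1) * c n (k + 1) + t (k + 2) * c n (k + 2)) (i j N : ℕ) (h : j ≤ N) :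
    c (i + j) 0 = ∑ k ∈ Finset.range (N + 1), c i k * dualStieltjes r s t j k := by
  induction j generalizing i with
  | zero =>
    rw [Finset.sum_range_succ', Finset.sum_eq_zero] <;> simp [dualStieltjes]
  | succ j ih =>
    have hp := sum_pairing hrec0 hrec i j N
    rw [dualStieltjes_eq_zero r s t j N (by omega),
      dualStieltjes_eq_zero r s t j (N + 1) (by omega), mul_zero, mul_zero, add_zero,
      add_zero] at hp
    rw [← hp, ← ih (i + 1) (by omega)]
    congr 1
    omega

theorem stmt2 (r s t : ℕ → Polynomial ℝ) (c : ℕ → ℕ → Polynomial ℝ)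
    (hr : ∀ k, QNonneg (r k)) (hs : ∀ k, QNonneg (s k)) (ht : ∀ k, 1 ≤ k → QNonneg (t k))
    (hc00 : c 0 0 = 1)
    (hupper : ∀ n k, n < k → c n k = 0)
    (hrec0 : ∀ n, c (n + 1) 0 = s 0 * c n 0 + t 1 * c n 1)
    (hrec : ∀ n k, c (n + 1) (k + 1) =
      r k * c n k + s (k + 1) * c n (k + 1) + t (k + 2) * c n (k + 2))
    (hcond : (QNonneg (s 0 - 1) ∧ ∀ k, 1 ≤ k → QNonneg (s k - (r (k - 1) * t k + 1)))) :
    QTP c ∧ QTP (fun i j => c (i + j) 0) := by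
  obtain ⟨h0, h1⟩ := hcond
  have hC := posMinors_stieltjes hr ht hc00 (fun k hk => hupper 0 k hk) hrec0 hrec h0 h1
  have hA : ∀ (m : ℕ) (i : Fin m → ℕ), StrictMono i →
      PosMinors (fun k a => dualStieltjes r s t (i a) k) := by
    refine posMinors_stieltjes (r := fun k => t (k + 1)) (s := s) (t := fun k => r (k - 1))
      (fun k => ht _ (by omega)) (fun k _ => hr _) (by rw [dualStieltjes])
      (fun k hk => dualStieltjes_eq_zero r s t 0 k hk) (fun n => by simp [dualStieltjes])
      (fun n k => by simp [dualStieltjes]) h0 fun k hk => ?_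
    have := h1 k hk
    rw [mul_comm] at this
    simpa [Nat.sub_add_cancel hk] using this
  refine ⟨fun m _ i j hi hj => ?_, fun m _ i j hi hj => ?_⟩
  · rw [← Matrix.det_transpose]
    exact hC m i hi j hj
  · obtain ⟨N, hN⟩ : ∃ N, ∀ b, j b ≤ N :=
      ⟨Finset.univ.sup j, fun b => Finset.le_sup (Finset.mem_univ b)⟩
    have hdet : Matrix.det (Matrix.of fun a b => c (i a + j b) 0) =
        Matrix.det (Matrix.of fun b => ∑ k ∈ Finset.range (N + 1),
          dualStieltjes r s t (j b) k • (fun a => c (i a) k : Fin m → Polynomial ℝ)) := by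
      rw [← Matrix.det_transpose]
      congr 1
      ext1 b a
      simp only [Matrix.transpose_apply, Matrix.of_apply, Finset.sum_apply, Pi.smul_apply,
        smul_eq_mul]
      rw [hankel_eq_sum hrec0 hrec (i a) (j b) N (hN b)]
      exact Finset.sum_congr rfl fun k _ => mul_comm _ _
    have hfac := factorial_mul_det (fun k a => c (i a) k) (N + 1)
      (fun b k => dualStieltjes r s t (j b) k)
    rw [← hdet] at hfac
    have hmem : (m.factorial : Polynomial ℝ) *
        Matrix.det (Matrix.of fun a b => c (i a + j b) 0) ∈ qNonnegSubsemiring := by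
      rw [hfac]
      exact sum_mem fun f _ => (hC m i hi).det_mul_det_mem (hA m j hj) f
    intro n
    have hn := hmem n
    rw [← Polynomial.C_eq_natCast, Polynomial.coeff_C_mul] at hn
    exact nonneg_of_mul_nonneg_right hn (by exact_mod_cast m.factorial_pos)
end

section
/- Suppose the sequences γ = (r_k)_{k≥0}, σ = (s_k)_{k≥0}, τ = (t_k)_{k≥1} of q-nonnegative polynomials satisfy s_0 ≥_q r_0 and s_k ≥_q r_k + t_k for all k ≥ 1. Then for every m ≥ 1, every m×m submatrix M of the Catalan–Stieltjes matrix C^{γ,σ,τ} (rows and columns chosen by strictly increasing index sequences), and every irreducible character χ of the symmetric group 𝔖_m, the immanant Imm_χ M is q-nonnegative; the same holds for every m×m submatrix of the Hankel matrix H^{γ,σ,τ}. -/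
/-!
The proof has a representation-theoretic half and a combinatorial half, which meet in the notion of
a positive semiring in the group algebra of `𝔖_m` over `ℝ[q]`.

*Representations.* Stembridge's positivity statement is needed: in every representation, products
of elements `1 + sᵢ`, with `sᵢ` a simple transposition, have nonnegative trace. The commuting
Jucys–Murphy operators `Xₖ` are symmetric for an invariant inner product, so there is a basis of
joint eigenvectors (weight vectors). Adjacent coordinates of a weight differ by at least `1`. In
this basis `1 + sᵢ` is the sum of the diagonal operator `1 + 1 / (Xᵢ₊₁ - Xᵢ)`, which is nonnegative
by the gap, and an intertwiner `Tᵢ` which exchanges two weight coordinates. The `Tᵢ` satisfy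
the braid relations (the Yang–Baxter equation), and `Tᵢ²` is a nonnegative diagonal operator.
Hence products of `Tᵢ`s and nonnegative diagonal operators can be reduced, as words in the
symmetric group, to canonical products; a canonical product which is not diagonal has zero diagonal,
because a path of weights returning to its start would have to exchange equal coordinates at some
step (`Seminormal.Canon.diag_nonneg`). The closed semiring generated by the `Tᵢ` and the nonnegative
diagonal operators therefore consists of operators of nonnegative trace. Being closed, it also
contains the symmetrizers of Young subgroups (`Seminormal.young_sum_mem`).

*Combinatorics.* Replace the immanants of a matrix by the universal immanant
`∑ π, (∏ i, M i (π i)) π` in the group algebra. A Cauchy–Binet formula shows that the matrices whose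
submatrices, with repeated indices allowed, have positive universal immanants are closed under
products (`QImmanant.Good.mul`). Nonnegative matrices supported on a chain have this property, since
their universal immanants are nonnegative multiples of a product of two Young symmetrizers
(`QImmanant.Good.one`). The tridiagonal matrix of the Catalan–Stieltjes recursion is a product of
two such matrices exactly because `s₀ ≥ r₀` and `sₖ ≥ rₖ + tₖ`
(`QImmanant.Good.step`). Finally, rows of `C` for different `n` are read off a single product of
tridiagonal matrices by letting paths wait below height zero before they start, and the Hankel
matrix is obtained by letting them wait below height zero again after they have come back
(`QImmanant.delayed`, `QImmanant.stopped`).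
-/

open Polynomial

/-- `χ : G → ℝ` is (the real-valued incarnation of) an irreducible character of `G`,
i.e. the character of an irreducible finite-dimensional complex representation of `G`. -/
def IsIrrChar {G : Type} [Monoid G] (χ : G → ℝ) : Prop :=
  ∃ V : FDRep ℂ G, CategoryTheory.Simple V ∧ ∀ g : G, (χ g : ℂ) = FDRep.character V g

/-! ### Weighted intertwiners and canonical products -/

namespace Seminormal

variable {ι : Type} [Fintype ι] [DecidableEq ι]

/-- The diagonal matrix whose entry at the basis vector `a` is a nonnegative function `c` of the
weight `wt a`. -/
noncomputable def wdiag (wt : ι → ℕ → ℝ) (c : (ℕ → ℝ) → NNReal) : Matrix ι ι ℂ :=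
  Matrix.diagonal fun a => ((c (wt a) : ℝ) : ℂ)

/-- Weighted intertwiners: matrices `T i` in a basis of weight vectors satisfying the braid
relations, such that `T i` exchanges the weight coordinates `i` and `i + 1`, vanishes on weights
for which these coordinates agree, and squares to a nonnegative function of the weight. -/
structure Intertwiners (wt : ι → ℕ → ℝ) (T : ℕ → Matrix ι ι ℂ) : Prop where
  weight : ∀ i a b, T i a b ≠ 0 → wt a = wt b ∘ Equiv.swap i (i + 1)
  regular : ∀ i a b, T i a b ≠ 0 → wt b i ≠ wt b (i + 1)
  sq : ∀ i, ∃ c, T i * T i = wdiag wt c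
  comm : ∀ i j, i + 1 < j → T i * T j = T j * T i
  braid : ∀ i, T i * T (i + 1) * T i = T (i + 1) * T i * T (i + 1)

/-- The descending product `T (j + l - 1) * ⋯ * T (j + 1) * T j`, which moves the weight
coordinate `j` to position `j + l`. -/
def run (T : ℕ → Matrix ι ι ℂ) (j : ℕ) : ℕ → Matrix ι ι ℂ
  | 0 => 1
  | l + 1 => T (j + l) * run T j l

/-- Canonical products: a nonnegative function of the weight, followed by descending runs ending at
positions `1, 2, …, k`. These are the operators attached to the standard reduced words of
permutations of `0, …, k`. -/
inductive Canon (wt : ι → ℕ → ℝ) (T : ℕ → Matrix ι ι ℂ) : ℕ → Matrix ι ι ℂ → Prop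
  | diag (c) : Canon wt T 0 (wdiag wt c)
  | step (k g j l) : Canon wt T k g → j + l = k + 1 → Canon wt T (k + 1) (g * run T j l)

variable {wt : ι → ℕ → ℝ} {T : ℕ → Matrix ι ι ℂ}

lemma wdiag_mul (c d : (ℕ → ℝ) → NNReal) : wdiag wt c * wdiag wt d = wdiag wt (c * d) := by
  simp [wdiag, Matrix.diagonal_mul_diagonal]

lemma Intertwiners.mul_wdiag (h : Intertwiners wt T) (i : ℕ) (c : (ℕ → ℝ) → NNReal) :
    ∃ d, T i * wdiag wt c = wdiag wt d * T i := by
  refine ⟨fun w => c (w ∘ Equiv.swap i (i + 1)), ?_⟩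
  ext a b
  rw [wdiag, wdiag, Matrix.mul_diagonal, Matrix.diagonal_mul]
  by_cases h0 : T i a b = 0
  · simp [h0]
  · rw [h.weight i a b h0, Function.comp_assoc, ← Equiv.coe_trans]
    rw [← Equiv.Perm.mul_def, Equiv.swap_mul_self]
    simp [mul_comm]

lemma Intertwiners.run_mul_wdiag (h : Intertwiners wt T) (j l : ℕ) (c : (ℕ → ℝ) → NNReal) :
    ∃ d, run T j l * wdiag wt c = wdiag wt d * run T j l := by
  induction l generalizing c with
  | zero => exact ⟨c, by simp [run]⟩
  | succ l ih =>
    obtain ⟨d, hd⟩ := ih c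
    obtain ⟨e, he⟩ := h.mul_wdiag (j + l) d
    exact ⟨e, by rw [run, mul_assoc, hd, ← mul_assoc, he, mul_assoc]⟩

lemma run_succ_mul (j l : ℕ) : run T (j + 1) l * T j = run T j (l + 1) := by
  induction l with
  | zero => simp [run]
  | succ l ih =>
    rw [run, mul_assoc, ih, run.eq_2 T j (l + 1)]
    congr 2
    omega

lemma Intertwiners.run_comm_left (h : Intertwiners wt T) (i j l : ℕ) (hij : i + 1 < j) :
    run T j l * T i = T i * run T j l := by
  induction l with
  | zero => simp [run]
  | succ l ih => rw [run, mul_assoc, ih, ← mul_assoc, ← h.comm i (j + l) (by omega), mul_assoc]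

lemma Intertwiners.run_comm_right (h : Intertwiners wt T) (i j l : ℕ) (hij : j + l < i) :
    run T j l * T i = T i * run T j l := by
  induction l with
  | zero => simp [run]
  | succ l ih =>
    rw [run, mul_assoc, ih (by omega), ← mul_assoc, h.comm (j + l) i (by omega), mul_assoc]

/-- The braid relation lets a letter pass through a run it is interior to. -/
lemma Intertwiners.run_pass (h : Intertwiners wt T) (i j l : ℕ) (hj : j ≤ i) (hl : i + 1 < j + l) :
    run T j l * T (i + 1) = T i * run T j l := by
  induction l with
  | zero => omega
  | succ l ih =>
    rcases Nat.lt_or_ge (i + 1) (j + l) with h1 | h1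
    · rw [run, mul_assoc, ih h1, ← mul_assoc, ← h.comm i (j + l) h1, mul_assoc]
    · obtain ⟨l', rfl⟩ : ∃ l', l = l' + 1 := ⟨l - 1, by omega⟩
      have e : i = j + l' := by omega
      subst e
      rw [run, run, mul_assoc, mul_assoc, h.run_comm_right _ _ _ (by omega)]
      have := h.braid (j + l')
      simp only [← add_assoc] at this ⊢
      rw [← mul_assoc, ← mul_assoc, ← this, mul_assoc, mul_assoc]

lemma Canon.mul_wdiag (h : Intertwiners wt T) {k : ℕ} {g : Matrix ι ι ℂ} (hg : Canon wt T k g)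
    (c : (ℕ → ℝ) → NNReal) : Canon wt T k (g * wdiag wt c) := by
  induction hg generalizing c with
  | diag d => rw [wdiag_mul]; exact .diag _
  | step k g j l _ hjl ih =>
    obtain ⟨d, hd⟩ := h.run_mul_wdiag j l c
    rw [mul_assoc, hd, ← mul_assoc]
    exact .step _ _ _ _ (ih d) hjl

/-- Canonical products are stable under right multiplication by a letter. -/
lemma Canon.mul_letter (h : Intertwiners wt T) {k : ℕ} {g : Matrix ι ι ℂ} (hg : Canon wt T k g)
    (i : ℕ) (hi : i < k) : Canon wt T k (g * T i) := by
  induction hg generalizing i with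
  | diag d => omega
  | step k g j l hg hjl ih =>
    rcases lt_trichotomy (i + 1) j with h1 | h1 | h1
    · rw [mul_assoc, h.run_comm_left i j l h1, ← mul_assoc]
      exact .step _ _ _ _ (ih i (by omega)) hjl
    · subst h1
      rw [mul_assoc, run_succ_mul]
      exact .step _ _ _ _ hg (by omega)
    · rcases Nat.lt_or_ge j i with h2 | h2
      · obtain ⟨i, rfl⟩ : ∃ i', i = i' + 1 := ⟨i - 1, by omega⟩
        rw [mul_assoc, h.run_pass i j l (by omega) (by omega), ← mul_assoc]
        exact .step _ _ _ _ (ih i (by omega)) hjl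
      · have e : i = j := by omega
        subst e
        obtain ⟨l, rfl⟩ : ∃ l', l = l' + 1 := ⟨l - 1, by omega⟩
        obtain ⟨c, hc⟩ := h.sq i
        obtain ⟨d, hd⟩ := h.run_mul_wdiag (i + 1) l c
        rw [← run_succ_mul, mul_assoc, mul_assoc, hc, hd, ← mul_assoc]
        exact .step _ _ _ _ (hg.mul_wdiag h d) (by omega)

lemma Canon.one (k : ℕ) : Canon wt T k 1 := by
  induction k with
  | zero =>
    have : (1 : Matrix ι ι ℂ) = wdiag wt 1 := by simp [wdiag]
    rw [this]; exact .diag _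
  | succ k ih =>
    have := Canon.step (wt := wt) (T := T) k 1 (k + 1) 0 ih rfl
    simpa [run] using this

lemma Intertwiners.run_weight (h : Intertwiners wt T) (j l : ℕ) (b a : ι)
    (hne : run T j l b a ≠ 0) : wt b (j + l) = wt a j ∧ ∀ x, j + l < x → wt b x = wt a x := by
  induction l generalizing b with
  | zero =>
    have : b = a := by
      by_contra hba
      simp [run, Matrix.one_apply_ne hba] at hne
    simp [this]
  | succ l ih =>
    rw [run, Matrix.mul_apply] at hne
    obtain ⟨c, -, hc⟩ := Finset.exists_ne_zero_of_sum_ne_zero hne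
    have h1 := h.weight _ _ _ (left_ne_zero_of_mul hc)
    obtain ⟨h2, h3⟩ := ih c (right_ne_zero_of_mul hc)
    constructor
    · rw [h1]; simp [← add_assoc, h2]
    · intro x hx
      rw [h1, Function.comp_apply, Equiv.swap_apply_of_ne_of_ne (by omega) (by omega),
        h3 x (by omega)]

lemma Canon.weight (h : Intertwiners wt T) {k : ℕ} {g : Matrix ι ι ℂ} (hg : Canon wt T k g)
    (a b : ι) (hne : g a b ≠ 0) (x : ℕ) (hx : k < x) : wt a x = wt b x := by
  induction hg generalizing b x with
  | diag d =>
    have : a = b := by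
      by_contra hba
      simp [wdiag, Matrix.diagonal_apply_ne _ hba] at hne
    rw [this]
  | step k g j l hg hjl ih =>
    rw [Matrix.mul_apply] at hne
    obtain ⟨c, -, hc⟩ := Finset.exists_ne_zero_of_sum_ne_zero hne
    rw [ih c (left_ne_zero_of_mul hc) x (by omega)]
    exact (h.run_weight _ _ _ _ (right_ne_zero_of_mul hc)).2 x (by omega)

/-- A canonical product has nonnegative diagonal. A nontrivial run which returns to the weight it
started from would have to exchange two equal adjacent coordinates, so it contributes zero. -/
lemma Canon.diag_nonneg (h : Intertwiners wt T) {k : ℕ} {g : Matrix ι ι ℂ} (hg : Canon wt T k g)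
    (a : ι) : 0 ≤ (g a a).re := by
  induction hg with
  | diag d => simp [wdiag]
  | step k g j l hg hjl ih =>
    cases l with
    | zero => simpa [run] using ih
    | succ l =>
      suffices (g * run T j (l + 1)) a a = 0 by simp [this]
      rw [Matrix.mul_apply]
      refine Finset.sum_eq_zero fun b _ => ?_
      by_contra hne
      have h1 := hg.weight h a b (left_ne_zero_of_mul hne) (k + 1) (by omega)
      have h2 := (h.run_weight _ _ _ _ (right_ne_zero_of_mul hne)).1
      have h3 := right_ne_zero_of_mul hne
      rw [run, Matrix.mul_apply] at h3
      obtain ⟨c, -, hc⟩ := Finset.exists_ne_zero_of_sum_ne_zero h3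
      obtain ⟨h4, h5⟩ := h.run_weight _ _ _ _ (right_ne_zero_of_mul hc)
      apply h.regular _ _ _ (left_ne_zero_of_mul hc)
      rw [hjl] at h2
      rw [h4, h5 _ (by omega), ← h2, ← h1, add_assoc, hjl]

/-- The closed cone of matrices generated by products of letters `T i`, `i < n`, and nonnegative
functions of the weight. -/
noncomputable def posCone (wt : ι → ℕ → ℝ) (T : ℕ → Matrix ι ι ℂ) (n : ℕ) :
    Subsemiring (Matrix ι ι ℂ) :=
  (Subsemiring.closure (Set.range (wdiag wt) ∪ T '' Set.Iio n)).topologicalClosure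

lemma trace_nonneg_of_mem_posCone (h : Intertwiners wt T) {n : ℕ} {g : Matrix ι ι ℂ}
    (hg : g ∈ posCone wt T n) : 0 ≤ g.trace.re := by
  have hcl : IsClosed {g : Matrix ι ι ℂ | 0 ≤ g.trace.re} :=
    isClosed_le continuous_const
      (Complex.continuous_re.comp (continuous_id.matrix_trace))
  refine closure_minimal (fun x hx => ?_) hcl hg
  replace hx : x ∈ AddSubmonoid.closure
      (Submonoid.closure (Set.range (wdiag wt) ∪ T '' Set.Iio n) : Set (Matrix ι ι ℂ)) :=
    Subsemiring.mem_closure_iff.1 hx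
  change 0 ≤ x.trace.re
  induction hx using AddSubmonoid.closure_induction with
  | mem x hx =>
    have : Canon wt T n x := by
      induction hx using Submonoid.closure_induction_right with
      | one => exact .one n
      | mul_right x _ y hy ih =>
        rcases hy with ⟨c, rfl⟩ | ⟨i, hi, rfl⟩
        · exact ih.mul_wdiag h c
        · exact ih.mul_letter h i hi
    rw [Matrix.trace, Complex.re_sum]
    exact Finset.sum_nonneg fun a _ => this.diag_nonneg h a
  | zero => simp
  | add x y _ _ hx hy => rw [Matrix.trace_add, Complex.add_re]; exact add_nonneg hx hy

end Seminormal

/-! ### Jucys–Murphy operators and the seminormal form -/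

namespace Seminormal

open Equiv

/-- The simple transposition exchanging `i` and `i + 1`, and the identity if `i + 1 ≥ m`. -/
def simple (m i : ℕ) : Perm (Fin m) :=
  if h : i + 1 < m then swap ⟨i, by omega⟩ ⟨i + 1, h⟩ else 1

lemma simple_of_lt {m i : ℕ} (h : i + 1 < m) :
    simple m i = swap ⟨i, by omega⟩ ⟨i + 1, h⟩ := by simp [simple, h]

lemma simple_mul_self (m i : ℕ) : simple m i * simple m i = 1 := by
  unfold simple; split_ifs <;> simp

lemma simple_braid {m i : ℕ} (h : i + 2 < m) :
    simple m i * simple m (i + 1) * simple m i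
      = simple m (i + 1) * simple m i * simple m (i + 1) := by
  rw [simple_of_lt (i := i) (by omega), simple_of_lt (i := i + 1) (by omega)]
  rw [swap_mul_swap_mul_swap (by simp) (by simp; omega), swap_comm (⟨i, _⟩ : Fin m) ⟨i + 1, _⟩,
    swap_comm (⟨i + 1, _⟩ : Fin m) ⟨i + 1 + 1, _⟩, swap_mul_swap_mul_swap (by simp) (by simp; omega),
    swap_comm]

lemma simple_comm {m i j : ℕ} (hij : i + 1 < j) :
    simple m i * simple m j = simple m j * simple m i := by
  unfold simple
  split_ifs with h1 h2 h2
  · apply Perm.Disjoint.commute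
    rw [Perm.disjoint_iff_disjoint_support, Perm.support_swap (by simp),
      Perm.support_swap (by simp)]
    simp only [Finset.disjoint_insert_left, Finset.disjoint_singleton_left, Finset.mem_insert,
      Finset.mem_singleton, Fin.mk.injEq]
    omega
  all_goals simp

section JM

variable {V : Type*} [NormedAddCommGroup V] [InnerProductSpace ℂ V] {m : ℕ}
  (ρ : Perm (Fin m) →* (V →ₗ[ℂ] V))

/-- The Jucys–Murphy operator `∑_{l < k} ρ (l k)`, extended by zero to `k ≥ m`. -/
noncomputable def jm (k : ℕ) : V →ₗ[ℂ] V :=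
  if h : k < m then ∑ l ∈ Finset.univ.filter (· < (⟨k, h⟩ : Fin m)), ρ (swap l ⟨k, h⟩) else 0

lemma jm_of_lt {k : ℕ} (h : k < m) :
    jm ρ k = ∑ l ∈ Finset.univ.filter (· < (⟨k, h⟩ : Fin m)), ρ (swap l ⟨k, h⟩) := by
  simp [jm, h]

lemma jm_comm_of_stable (g : Perm (Fin m)) (k : ℕ)
    (hg : ∀ h : k < m, g ⟨k, h⟩ = ⟨k, h⟩ ∧ ∀ l, g l < ⟨k, h⟩ ↔ l < ⟨k, h⟩) :
    ρ g * jm ρ k = jm ρ k * ρ g := by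
  by_cases h : k < m
  · obtain ⟨h1, h2⟩ := hg h
    rw [jm_of_lt ρ h, Finset.mul_sum, Finset.sum_mul]
    refine Finset.sum_equiv g (by simpa using fun l => (h2 l).symm) fun l _ => ?_
    rw [← map_mul, ← map_mul]
    congr 1
    rw [Equiv.mul_swap_eq_swap_mul, h1]
  · simp [jm, h]

lemma simple_jm_comm {i j : ℕ} (h1 : j ≠ i) (h2 : j ≠ i + 1) :
    ρ (simple m i) * jm ρ j = jm ρ j * ρ (simple m i) := by
  apply jm_comm_of_stable
  intro hj
  by_cases h : i + 1 < m
  · rw [simple_of_lt h]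
    refine ⟨swap_apply_of_ne_of_ne (by simpa using h1) (by simpa using h2), fun l => ?_⟩
    rw [swap_apply_def]
    split_ifs with h3 h4
    · subst h3; simp only [Fin.mk_lt_mk]; omega
    · subst h4; simp only [Fin.mk_lt_mk]; omega
    · rfl
  · simp [simple, h]

lemma jm_succ {i : ℕ} (h : i + 1 < m) :
    ρ (simple m i) * jm ρ i + 1 = jm ρ (i + 1) * ρ (simple m i) := by
  have hs : Finset.univ.filter (· < (⟨i + 1, h⟩ : Fin m))
      = insert ⟨i, by omega⟩ (Finset.univ.filter (· < (⟨i, by omega⟩ : Fin m))) := by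
    ext l; simp [Fin.lt_def, Fin.ext_iff]; omega
  rw [jm_of_lt ρ h, hs, Finset.sum_insert (by simp), jm_of_lt ρ (by omega : i < m),
    Finset.mul_sum, add_mul, Finset.sum_mul, add_comm]
  congr 1
  · rw [← simple_of_lt h, ← map_mul, simple_mul_self, map_one]
  · refine Finset.sum_congr rfl fun l hl => ?_
    rw [← map_mul, ← map_mul]
    congr 1
    have hl' : l.val < i := by simpa [Fin.lt_def] using hl
    rw [Equiv.mul_swap_eq_swap_mul, simple_of_lt h, swap_apply_left,
      swap_apply_of_ne_of_ne] <;> simp [Fin.ext_iff] <;> omega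

lemma jm_commute (j k : ℕ) : Commute (jm ρ j) (jm ρ k) := by
  wlog hjk : j < k generalizing j k
  · rcases eq_or_lt_of_le (not_lt.1 hjk) with h | h
    · subst h; exact Commute.refl _
    · exact (this _ _ h).symm
  by_cases hj : j < m
  · rw [jm_of_lt ρ hj]
    refine Commute.sum_left _ _ _ fun l hl => ?_
    have hl' : l.val < j := by simpa [Fin.lt_def] using hl
    refine jm_comm_of_stable ρ _ _ fun hk => ⟨swap_apply_of_ne_of_ne ?_ ?_, fun x => ?_⟩
    · simp [Fin.ext_iff]; omega
    · simp [Fin.ext_iff]; omega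
    · rw [swap_apply_def]
      split_ifs with h3 h4
      · subst h3; simp only [Fin.lt_def]; omega
      · subst h4; simp only [Fin.lt_def]; omega
      · rfl
  · simp [jm, hj]

lemma jm_symmetric (hρ : ∀ g x y, inner ℂ (ρ g x) (ρ g y) = inner ℂ x y) (k : ℕ) :
    (jm ρ k).IsSymmetric := by
  by_cases h : k < m
  · rw [jm_of_lt ρ h]
    refine LinearMap.isSymmetric_sum _ fun l _ x y => ?_
    rw [← hρ (swap l ⟨k, h⟩), ← Module.End.mul_apply, ← map_mul, swap_mul_self]
    simp
  · simp [jm, h]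

/-- `v` is a joint eigenvector of the Jucys–Murphy operators, of weight `α`, or `v = 0`. -/
def IsWeight (α : ℕ → ℝ) (v : V) : Prop := ∀ k, jm ρ k v = (α k : ℂ) • v

/-- The scalar by which a simple transposition acts on a weight space, up to the intertwiner. -/
noncomputable def axial (α : ℕ → ℝ) (i : ℕ) : ℂ := (((α (i + 1) - α i)⁻¹ : ℝ) : ℂ)

variable {ρ}

/-- Adjacent coordinates of a weight differ by at least `1`: pairing the relation
`sᵢ Xᵢ + 1 = Xᵢ₊₁ sᵢ` with `v` gives `(α (i + 1) - α i) ⟪sᵢ v, v⟫ = ‖v‖²`, and `sᵢ` is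
unitary. -/
lemma IsWeight.gap (hρ : ∀ g x y, inner ℂ (ρ g x) (ρ g y) = inner ℂ x y)
    {α : ℕ → ℝ} {v : V} (hv : IsWeight ρ α v) (h0 : v ≠ 0) {i : ℕ} (h : i + 1 < m) :
    1 ≤ |α (i + 1) - α i| := by
  have h1 := congrArg (fun f : V →ₗ[ℂ] V => inner ℂ (f v) v) (jm_succ ρ h)
  simp only [LinearMap.add_apply, Module.End.mul_apply, Module.End.one_apply] at h1
  rw [jm_symmetric ρ hρ, hv i, hv (i + 1), map_smul, inner_add_left, inner_smul_left,
    inner_smul_right, Complex.conj_ofReal] at h1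
  set z := inner ℂ (ρ (simple m i) v) v with hz
  have hn : ‖ρ (simple m i) v‖ = ‖v‖ := by
    have := hρ (simple m i) v v
    rw [inner_self_eq_norm_sq_to_K, inner_self_eq_norm_sq_to_K] at this
    norm_cast at this
    exact (sq_eq_sq₀ (norm_nonneg _) (norm_nonneg _)).1 this
  have hz1 : ‖z‖ ≤ ‖v‖ * ‖v‖ := by
    have := norm_inner_le_norm (𝕜 := ℂ) (ρ (simple m i) v) v
    rwa [hn] at this
  have h2 : ((α (i + 1) - α i : ℝ) : ℂ) * z = ((‖v‖ * ‖v‖ : ℝ) : ℂ) := by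
    rw [inner_self_eq_norm_sq_to_K v] at h1
    push_cast
    have h3 : (((‖v‖ : ℝ) : ℂ)) ^ 2 = (α (i + 1) : ℂ) * z - α i * z := by
      rw [← h1]; simp
    rw [← sq, h3]; ring
  have h3 := congrArg norm h2
  rw [norm_mul, Complex.norm_real, Complex.norm_real, Real.norm_eq_abs, Real.norm_eq_abs,
    abs_of_nonneg (mul_self_nonneg ‖v‖)] at h3
  have hpos : 0 < ‖v‖ * ‖v‖ := by have := norm_pos_iff.2 h0; positivity
  by_contra hlt
  push Not at hlt
  nlinarith [abs_nonneg (α (i + 1) - α i), norm_nonneg z]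

lemma IsWeight.sub {α : ℕ → ℝ} {v w : V} (hv : IsWeight ρ α v) (hw : IsWeight ρ α w) :
    IsWeight ρ α (v - w) := fun k => by rw [map_sub, hv, hw, smul_sub]

lemma IsWeight.smul {α : ℕ → ℝ} {v : V} (hv : IsWeight ρ α v) (z : ℂ) :
    IsWeight ρ α (z • v) := fun k => by rw [map_smul, hv, smul_comm]

/-- The intertwiner `sᵢ - 1 / (α (i + 1) - α i)` exchanges the weight coordinates `i`, `i + 1`. -/
lemma IsWeight.intertwine (hρ : ∀ g x y, inner ℂ (ρ g x) (ρ g y) = inner ℂ x y)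
    {α : ℕ → ℝ} {v : V} (hv : IsWeight ρ α v) {i : ℕ} (h : i + 1 < m) :
    IsWeight ρ (α ∘ swap i (i + 1)) (ρ (simple m i) v - axial α i • v) := by
  by_cases h0 : v = 0
  · intro k; simp [h0]
  have hg := hv.gap hρ h0 h
  have hne : α (i + 1) - α i ≠ 0 := by
    intro h; rw [h] at hg; norm_num at hg
  have hne' : ((α (i + 1) : ℂ) - α i) * axial α i = 1 := by
    rw [axial]; norm_cast; exact mul_inv_cancel₀ hne
  intro k
  have hs : ∀ x : V, ρ (simple m i) (ρ (simple m i) x) = x := fun x => by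
    rw [← Module.End.mul_apply, ← map_mul, simple_mul_self, map_one]; rfl
  have h1 : jm ρ (i + 1) (ρ (simple m i) v) = (α i : ℂ) • ρ (simple m i) v + v := by
    have := congrArg (fun f : V →ₗ[ℂ] V => f v) (jm_succ ρ h)
    simp only [LinearMap.add_apply, Module.End.mul_apply, Module.End.one_apply] at this
    rw [← this, hv i, map_smul]
  rcases eq_or_ne k i with rfl | hki
  · have h2 : jm ρ k (ρ (simple m k) v) = (α (k + 1) : ℂ) • ρ (simple m k) v - v := by
      have := congrArg (fun f : V →ₗ[ℂ] V => f (ρ (simple m k) v)) (jm_succ ρ h)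
      simp only [LinearMap.add_apply, Module.End.mul_apply, Module.End.one_apply] at this
      rw [hs, hv (k + 1)] at this
      rw [← hs (jm ρ k (ρ (simple m k) v)), eq_sub_of_add_eq this, map_sub, map_smul, hs]
    rw [map_sub, h2, map_smul, hv k]
    simp only [Function.comp_apply, swap_apply_left]
    linear_combination (norm := module) hne' • v
  · rcases eq_or_ne k (i + 1) with rfl | hki'
    · rw [map_sub, h1, map_smul, hv (i + 1)]
      simp only [Function.comp_apply, swap_apply_right]
      linear_combination (norm := module) (-hne') • v
    · have := congrArg (fun f : V →ₗ[ℂ] V => f v) (simple_jm_comm ρ hki hki')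
      simp only [Module.End.mul_apply] at this
      rw [map_sub, ← this, hv k, map_smul, map_smul, hv k, Function.comp_apply,
        swap_apply_of_ne_of_ne hki hki', smul_sub, smul_comm]

lemma IsWeight.coord {ι : Type*} {b : Module.Basis ι ℂ V} {wt : ι → ℕ → ℝ}
    (hb : ∀ a, IsWeight ρ (wt a) (b a)) {α : ℕ → ℝ} {v : V} (hv : IsWeight ρ α v) (a : ι)
    (ha : b.repr v a ≠ 0) : wt a = α := by
  funext k
  have h1 : ∀ x, b.repr (jm ρ k x) a = wt a k * b.repr x a := by
    intro x
    have : (b.coord a).comp (jm ρ k) = (wt a k : ℂ) • b.coord a := by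
      refine b.ext fun c => ?_
      simp only [LinearMap.comp_apply, hb c k, map_smul, LinearMap.smul_apply,
        Module.Basis.coord_apply, Module.Basis.repr_self, smul_eq_mul]
      by_cases h : c = a
      · rw [h]
      · simp [h]
    exact congrArg (fun f : V →ₗ[ℂ] ℂ => f x) this
  have h2 := h1 v
  rw [hv k, map_smul, Finsupp.smul_apply, smul_eq_mul] at h2
  exact_mod_cast (mul_right_cancel₀ ha h2).symm

/-- The operator acting on each weight basis vector by its axial scalar. -/
noncomputable def axialOp {ι : Type*} (b : Module.Basis ι ℂ V) (wt : ι → ℕ → ℝ) (i : ℕ) :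
    V →ₗ[ℂ] V := b.constr ℂ fun a => axial (wt a) i • b a

lemma IsWeight.axialOp_apply {ι : Type*} {b : Module.Basis ι ℂ V} {wt : ι → ℕ → ℝ}
    (hb : ∀ a, IsWeight ρ (wt a) (b a)) {α : ℕ → ℝ} {v : V} (hv : IsWeight ρ α v) (i : ℕ) :
    axialOp b wt i v = axial α i • v := by
  refine b.ext_elem fun a => ?_
  have : (b.coord a).comp (axialOp b wt i) = axial (wt a) i • b.coord a := by
    refine b.ext fun c => ?_
    simp only [axialOp, LinearMap.comp_apply, Module.Basis.constr_basis, map_smul,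
      LinearMap.smul_apply, Module.Basis.coord_apply, Module.Basis.repr_self, smul_eq_mul]
    by_cases h : c = a
    · rw [h]
    · simp [h]
  have h1 : b.repr (axialOp b wt i v) a = axial (wt a) i * b.repr v a :=
    congrArg (fun f : V →ₗ[ℂ] ℂ => f v) this
  rw [h1, map_smul, Finsupp.smul_apply, smul_eq_mul]
  by_cases ha : b.repr v a = 0
  · simp [ha]
  · rw [hv.coord hb a ha]

variable (ρ) in
/-- The intertwining operators `sᵢ - 1 / (Xᵢ₊₁ - Xᵢ)`, extended by zero to `i + 1 ≥ m`. -/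
noncomputable def twine {ι : Type*} (b : Module.Basis ι ℂ V) (wt : ι → ℕ → ℝ) (i : ℕ) :
    V →ₗ[ℂ] V := if i + 1 < m then ρ (simple m i) - axialOp b wt i else 0

section Twine

variable {ι : Type*} {b : Module.Basis ι ℂ V} {wt : ι → ℕ → ℝ}
  (hρ : ∀ g x y, inner ℂ (ρ g x) (ρ g y) = inner ℂ x y)
  (hb : ∀ a, IsWeight ρ (wt a) (b a))
include hb

lemma IsWeight.twine_apply {α : ℕ → ℝ} {v : V} (hv : IsWeight ρ α v) {i : ℕ} (h : i + 1 < m) :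
    twine ρ b wt i v = ρ (simple m i) v - axial α i • v := by
  rw [twine, if_pos h, LinearMap.sub_apply, hv.axialOp_apply hb]

include hρ

lemma IsWeight.twine {α : ℕ → ℝ} {v : V} (hv : IsWeight ρ α v) (i : ℕ) :
    IsWeight ρ (α ∘ swap i (i + 1)) (twine ρ b wt i v) := by
  by_cases h : i + 1 < m
  · rw [hv.twine_apply hb h]
    exact hv.intertwine hρ h
  · intro k; simp [Seminormal.twine, h]

omit hb in
lemma IsWeight.twine_eq_zero {α : ℕ → ℝ} {v : V} (hv : IsWeight ρ α v) {i : ℕ}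
    (h : α i = α (i + 1)) : Seminormal.twine ρ b wt i v = 0 := by
  by_cases hi : i + 1 < m
  · by_cases h0 : v = 0
    · simp [h0]
    · have := hv.gap hρ h0 hi
      rw [h, sub_self] at this
      norm_num at this
  · simp [Seminormal.twine, hi]

lemma twine_comm {i j : ℕ} (hij : i + 1 < j) :
    twine ρ b wt i * twine ρ b wt j = twine ρ b wt j * twine ρ b wt i := by
  by_cases hj : j + 1 < m
  swap
  · simp [twine, hj]
  have hi : i + 1 < m := by omega
  refine b.ext fun a => ?_
  have hv := hb a
  rw [Module.End.mul_apply, Module.End.mul_apply, (hv.twine hρ hb j).twine_apply hb hi,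
    (hv.twine hρ hb i).twine_apply hb hj, hv.twine_apply hb hi, hv.twine_apply hb hj]
  have e1 : axial (wt a ∘ swap j (j + 1)) i = axial (wt a) i := by
    simp only [axial, Function.comp_apply]
    rw [swap_apply_of_ne_of_ne, swap_apply_of_ne_of_ne] <;> omega
  have e2 : axial (wt a ∘ swap i (i + 1)) j = axial (wt a) j := by
    simp only [axial, Function.comp_apply]
    rw [swap_apply_of_ne_of_ne, swap_apply_of_ne_of_ne] <;> omega
  have e3 : ρ (simple m i) (ρ (simple m j) (b a)) = ρ (simple m j) (ρ (simple m i) (b a)) := by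
    rw [← Module.End.mul_apply, ← Module.End.mul_apply, ← map_mul, ← map_mul, simple_comm hij]
  rw [e1, e2, map_sub, map_sub, map_smul, map_smul, e3]
  module

lemma twine_sq_apply {α : ℕ → ℝ} {v : V} (hv : IsWeight ρ α v) {i : ℕ} (h : i + 1 < m) :
    twine ρ b wt i (twine ρ b wt i v) = (1 - axial α i ^ 2) • v := by
  rw [(hv.twine hρ hb i).twine_apply hb h, hv.twine_apply hb h]
  have e1 : axial (α ∘ swap i (i + 1)) i = - axial α i := by
    simp only [axial, Function.comp_apply, swap_apply_left, swap_apply_right]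
    rw [← neg_sub, inv_neg]
    push_cast
    rfl
  have hs : ρ (simple m i) (ρ (simple m i) v) = v := by
    rw [← Module.End.mul_apply, ← map_mul, simple_mul_self, map_one]; rfl
  rw [e1, map_sub, map_smul, hs]
  module

/-- The Yang–Baxter equation for the intertwiners. -/
lemma twine_braid (i : ℕ) :
    twine ρ b wt i * twine ρ b wt (i + 1) * twine ρ b wt i
      = twine ρ b wt (i + 1) * twine ρ b wt i * twine ρ b wt (i + 1) := by
  by_cases hj : i + 2 < m
  swap
  · simp [twine, show ¬ (i + 1 + 1 < m) from hj]
  have hi : i + 1 < m := by omega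
  refine b.ext fun a => ?_
  simp only [Module.End.mul_apply]
  have hv := hb a
  set v := b a
  set α := wt a
  have hs1 : swap i (i + 1) (i + 2) = i + 2 := swap_apply_of_ne_of_ne (by omega) (by omega)
  have hs2 : swap (i + 1) (i + 2) i = i := swap_apply_of_ne_of_ne (by omega) (by omega)
  by_cases hac : α i = α (i + 2)
  · rw [(hv.twine hρ hb i).twine_eq_zero hρ (i := i + 1) (by simp [add_assoc, hs1, hac]),
      (hv.twine hρ hb (i + 1)).twine_eq_zero hρ (by simp [add_assoc, hs2, hac])]
    simp
  by_cases h0 : v = 0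
  · simp [h0]
  have hab : α (i + 1) - α i ≠ 0 := by
    have := hv.gap hρ h0 hi
    intro h; rw [h] at this; norm_num at this
  have hbc : α (i + 2) - α (i + 1) ≠ 0 := by
    have := hv.gap hρ h0 hj
    intro h; rw [add_assoc] at this; norm_num [h] at this
  have hac' : α (i + 2) - α i ≠ 0 := fun h => hac (by linarith)
  rw [((hv.twine hρ hb i).twine hρ hb (i + 1)).twine_apply hb hi,
    (hv.twine hρ hb i).twine_apply hb hj, hv.twine_apply hb hi,
    ((hv.twine hρ hb (i + 1)).twine hρ hb i).twine_apply hb hj,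
    (hv.twine hρ hb (i + 1)).twine_apply hb hi, hv.twine_apply hb hj]
  have e1 : axial (α ∘ swap i (i + 1)) (i + 1) = axial (α ∘ swap (i + 1) (i + 1 + 1)) i := by
    simp [axial, add_assoc, hs1, hs2]
  have e2 : axial ((α ∘ swap i (i + 1)) ∘ swap (i + 1) (i + 1 + 1)) i = axial α (i + 1) := by
    simp [axial, add_assoc, hs1, hs2]
  have e3 : axial ((α ∘ swap (i + 1) (i + 1 + 1)) ∘ swap i (i + 1)) (i + 1) = axial α i := by
    simp [axial, add_assoc, hs1, hs2]
  have e4 : axial (α ∘ swap (i + 1) (i + 1 + 1)) i * (axial α i + axial α (i + 1))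
      = axial α i * axial α (i + 1) := by
    simp only [axial, Function.comp_apply, swap_apply_left, hs2, add_assoc, one_add_one_eq_two]
    norm_cast
    field_simp
    ring
  rw [e1, e2, e3]
  set x := axial α i
  set y := axial α (i + 1)
  set z := axial (α ∘ swap (i + 1) (i + 1 + 1)) i
  have hs : ∀ j, ∀ x : V, ρ (simple m j) (ρ (simple m j) x) = x := fun j x => by
    rw [← Module.End.mul_apply, ← map_mul, simple_mul_self, map_one]; rfl
  have hbr : ρ (simple m i) (ρ (simple m (i + 1)) (ρ (simple m i) v))
      = ρ (simple m (i + 1)) (ρ (simple m i) (ρ (simple m (i + 1)) v)) := by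
    simp only [← Module.End.mul_apply, ← map_mul]
    rw [← mul_assoc, simple_braid hj, mul_assoc]
  simp only [map_sub, map_smul, hs, hbr]
  linear_combination (norm := module)
    e4 • (ρ (simple m i) v) - e4 • (ρ (simple m (i + 1)) v)

end Twine

/-- The Jucys–Murphy operators commute and are symmetric, so they have a joint eigenbasis. -/
lemma exists_weight_basis [FiniteDimensional ℂ V]
    (hρ : ∀ g x y, inner ℂ (ρ g x) (ρ g y) = inner ℂ x y) :
    ∃ (d : ℕ) (b : Module.Basis (Fin d) ℂ V) (wt : Fin d → ℕ → ℝ),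
      ∀ a, IsWeight ρ (wt a) (b a) := by
  have htop := LinearMap.IsSymmetric.iSup_iInf_eq_top_of_commute (T := jm ρ) (jm_symmetric ρ hρ)
    (fun j k _ => jm_commute ρ j k)
  set S : Set V := {v | v ≠ 0 ∧ ∃ γ : ℕ → ℂ, ∀ k, jm ρ k v = γ k • v} with hS
  have hspan : ⊤ ≤ Submodule.span ℂ S := by
    rw [← htop]
    refine iSup_le fun γ v hv => ?_
    by_cases h0 : v = 0
    · rw [h0]; exact Submodule.zero_mem _
    refine Submodule.subset_span ⟨h0, γ, fun k => ?_⟩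
    exact Module.End.mem_eigenspace_iff.1 (Submodule.mem_iInf _ |>.1 hv k)
  let b' := Module.Basis.ofSpan hspan
  have hmem : ∀ a, b' a ∈ S := fun a => Module.Basis.ofSpan_subset hspan ⟨a, rfl⟩
  have := Module.Finite.finite_basis b'
  let e := Finite.equivFin ((linearIndepOn_empty ℂ (id : V → V)).extend (Set.empty_subset S))
  refine ⟨_, b'.reindex e, fun a k => ((hmem (e.symm a)).2.choose k).re, fun a k => ?_⟩
  rw [Module.Basis.reindex_apply]
  have h1 := (hmem (e.symm a)).2.choose_spec k
  rw [h1]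
  congr 1
  have h2 : Module.End.HasEigenvalue (jm ρ k) ((hmem (e.symm a)).2.choose k) :=
    Module.End.hasEigenvalue_of_hasEigenvector
      ⟨Module.End.mem_eigenspace_iff.2 h1, (hmem (e.symm a)).1⟩
  have h3 := (jm_symmetric ρ hρ k).conj_eigenvalue_eq_self h2
  exact (Complex.conj_eq_iff_re.1 h3).symm

/-- In a suitable basis of weight vectors each `1 + sᵢ` is the sum of a nonnegative diagonal matrix
and an intertwiner. -/
theorem exists_intertwiners [FiniteDimensional ℂ V]
    (hρ : ∀ g x y, inner ℂ (ρ g x) (ρ g y) = inner ℂ x y) :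
    ∃ (d : ℕ) (b : Module.Basis (Fin d) ℂ V) (wt : Fin d → ℕ → ℝ)
      (T : ℕ → Matrix (Fin d) (Fin d) ℂ), Intertwiners wt T ∧
      ∀ i, i + 1 < m → 1 + LinearMap.toMatrixAlgEquiv b (ρ (simple m i)) ∈ posCone wt T m := by
  obtain ⟨d, b, wt, hb⟩ := exists_weight_basis hρ
  have hdiag : ∀ (f : V →ₗ[ℂ] V) (c : (ℕ → ℝ) → NNReal),
      (∀ a, f (b a) = ((c (wt a) : ℝ) : ℂ) • b a) →
      LinearMap.toMatrixAlgEquiv b f = wdiag wt c := by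
    intro f c hf
    ext x y
    rw [LinearMap.toMatrixAlgEquiv_apply, hf, wdiag, map_smul, Module.Basis.repr_self,
      Matrix.diagonal_apply]
    by_cases h : x = y
    · simp [h]
    · simp [h]
  have habs : ∀ a i, i + 1 < m → |(wt a (i + 1) - wt a i)⁻¹| ≤ 1 := fun a i h => by
    rw [abs_inv]
    exact inv_le_one_of_one_le₀ ((hb a).gap hρ (b.ne_zero a) h)
  refine ⟨d, b, wt, fun i => LinearMap.toMatrixAlgEquiv b (twine ρ b wt i), ?_, ?_⟩
  · constructor
    · intro i a c hne
      rw [LinearMap.toMatrixAlgEquiv_apply] at hne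
      exact ((hb c).twine hρ hb i).coord hb a hne
    · intro i a c hne h
      rw [LinearMap.toMatrixAlgEquiv_apply, (hb c).twine_eq_zero hρ h] at hne
      simp at hne
    · intro i
      by_cases hi : i + 1 < m
      · refine ⟨fun w => Real.toNNReal (1 - ((w (i + 1) - w i)⁻¹) ^ 2), ?_⟩
        rw [← map_mul]
        refine hdiag _ _ fun a => ?_
        rw [Module.End.mul_apply, twine_sq_apply hρ hb (hb a) hi, Real.coe_toNNReal, axial]
        · push_cast; rfl
        · have := (sq_le_one_iff_abs_le_one _).2 (habs a i hi)
          linarith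
      · refine ⟨0, ?_⟩
        simp [twine, hi, wdiag]
    · intro i j hij
      rw [← map_mul, ← map_mul, twine_comm hρ hb hij]
    · intro i
      simp only [← map_mul]
      rw [twine_braid hρ hb]
  · intro i hi
    have h1 : (1 : Matrix (Fin d) (Fin d) ℂ) + LinearMap.toMatrixAlgEquiv b (ρ (simple m i))
        = wdiag wt (fun w => Real.toNNReal (1 + (w (i + 1) - w i)⁻¹))
          + LinearMap.toMatrixAlgEquiv b (twine ρ b wt i) := by
      have h2 : ρ (simple m i) = axialOp b wt i + twine ρ b wt i := by simp [twine, hi]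
      rw [h2, map_add, ← add_assoc]
      congr 1
      rw [← map_one (LinearMap.toMatrixAlgEquiv b), ← map_add]
      refine hdiag _ _ fun a => ?_
      rw [LinearMap.add_apply, (hb a).axialOp_apply hb, Real.coe_toNNReal, axial]
      · push_cast; rw [add_smul, one_smul]; rfl
      · have := (abs_le.1 (habs a i hi)).1
        linarith
    rw [h1]
    apply Subsemiring.le_topologicalClosure
    exact add_mem (Subsemiring.subset_closure (Or.inl ⟨_, rfl⟩))
      (Subsemiring.subset_closure (Or.inr ⟨i, show i < m by omega, rfl⟩))

end JM
end Seminormal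

/-! ### Positive semirings and Young symmetrizers -/

namespace Seminormal

open Equiv

/-- The data through which positivity enters the combinatorial argument: a closed semiring of
matrices with nonnegative trace which contains the nonnegative scalars and all `1 + sᵢ`. -/
theorem exists_positive_semiring {V : Type*} [AddCommGroup V] [Module ℂ V] [FiniteDimensional ℂ V]
    {m : ℕ} (ρ : Perm (Fin m) →* (V →ₗ[ℂ] V)) :
    ∃ (d : ℕ) (R : Perm (Fin m) →* Matrix (Fin d) (Fin d) ℂ)
      (P : Subsemiring (Matrix (Fin d) (Fin d) ℂ)), IsClosed (P : Set (Matrix (Fin d) (Fin d) ℂ)) ∧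
      (∀ x : ℝ, 0 ≤ x → algebraMap ℝ _ x ∈ P) ∧
      (∀ i, i + 1 < m → 1 + R (simple m i) ∈ P) ∧
      (∀ A ∈ P, 0 ≤ A.trace.re) ∧ ∀ g, (R g).trace = LinearMap.trace ℂ V (ρ g) := by
  -- averaging an inner product over the group makes `ρ` unitary
  let e : V ≃ₗ[ℂ] EuclideanSpace ℂ (Fin (Module.finrank ℂ V)) :=
    (Module.finBasis ℂ V).equivFun.trans (WithLp.linearEquiv 2 ℂ _).symm
  let core : InnerProductSpace.Core ℂ V :=
    { inner := fun x y => ∑ g, inner ℂ (e (ρ g x)) (e (ρ g y))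
      conj_inner_symm := fun x y => by
        rw [map_sum]
        exact Finset.sum_congr rfl fun g _ => inner_conj_symm _ _
      re_inner_nonneg := fun x => by
        rw [map_sum]
        exact Finset.sum_nonneg fun g _ => inner_self_nonneg
      add_left := fun x y z => by
        simp only [map_add, inner_add_left, Finset.sum_add_distrib]
      smul_left := fun x y z => by
        simp only [map_smul, inner_smul_left, Finset.mul_sum]
      definite := fun x hx => by
        have h1 : ∑ g, RCLike.re (inner ℂ (e (ρ g x)) (e (ρ g x))) = 0 := by
          rw [← map_sum, hx]; simp
        have h2 := (Finset.sum_eq_zero_iff_of_nonneg fun g _ => inner_self_nonneg).1 h1 1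
          (Finset.mem_univ _)
        rw [map_one, Module.End.one_apply, inner_self_eq_norm_sq] at h2
        simpa using h2 }
  let : NormedAddCommGroup V := core.toNormedAddCommGroup
  let : InnerProductSpace ℂ V := InnerProductSpace.ofCore core.toCore
  have hρ : ∀ g x y, inner ℂ (ρ g x) (ρ g y) = inner ℂ x y := by
    intro g x y
    change ∑ h, inner ℂ (e (ρ h (ρ g x))) (e (ρ h (ρ g y)))
      = ∑ h, inner ℂ (e (ρ h x)) (e (ρ h y))
    refine Fintype.sum_equiv (Equiv.mulRight g) _ _ fun h => ?_
    simp [Module.End.mul_apply]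
  obtain ⟨d, b, wt, T, hT, hpos⟩ := exists_intertwiners hρ
  refine ⟨d, (LinearMap.toMatrixAlgEquiv b : (V →ₗ[ℂ] V) →* _).comp ρ, posCone wt T m,
    Subsemiring.isClosed_topologicalClosure _, fun x hx => ?_, hpos,
    fun A hA => trace_nonneg_of_mem_posCone hT hA, fun g => ?_⟩
  · apply Subsemiring.le_topologicalClosure
    apply Subsemiring.subset_closure
    refine Or.inl ⟨fun _ => ⟨x, hx⟩, ?_⟩
    ext i j
    simp [wdiag, Matrix.algebraMap_eq_diagonal]
    rfl
  · rw [LinearMap.trace_eq_matrix_trace ℂ b]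
    rfl

/-- For monotone `g`, the Young subgroup of permutations preserving `g` is generated by simple
transpositions. -/
lemma young_induction {m : ℕ} {g : Fin m → ℕ} (hg : Monotone g) (H : Subgroup (Perm (Fin m)))
    (hH : ∀ i (h : i + 1 < m), g ⟨i, by omega⟩ = g ⟨i + 1, h⟩ → simple m i ∈ H)
    (π : Perm (Fin m)) (hπ : g ∘ π = g) : π ∈ H := by
  have hswap : ∀ n i (h : i + n < m), g ⟨i, by omega⟩ = g ⟨i + n, h⟩ →
      swap (⟨i, by omega⟩ : Fin m) ⟨i + n, h⟩ ∈ H := by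
    intro n
    induction n with
    | zero => intro i h _; simp only [add_zero, swap_self]; exact H.one_mem
    | succ n ih =>
      intro i h hgi
      have h1 : g ⟨i, by omega⟩ ≤ g ⟨i + n, by omega⟩ := hg (by simp)
      have h2 : g ⟨i + n, by omega⟩ ≤ g ⟨i + (n + 1), h⟩ := hg (by simp)
      have h3 := ih i (by omega) (by omega)
      have h4 := hH (i + n) h (le_antisymm (hg (by simp)) (hgi ▸ hg (by simp)))
      rw [simple_of_lt (by omega)] at h4
      rcases Nat.eq_zero_or_pos n with rfl | hn
      · exact h4
      · have h5 := swap_mul_swap_mul_swap (x := (⟨i + n + 1, h⟩ : Fin m))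
          (y := ⟨i + n, by omega⟩) (z := ⟨i, by omega⟩) (by simp) (by simp; omega)
        rw [swap_comm (⟨i + n, _⟩ : Fin m) ⟨i, _⟩, swap_comm (⟨i + n + 1, _⟩ : Fin m) ⟨i + n, _⟩] at h5
        have h6 := H.mul_mem (H.mul_mem h3 h4) h3
        rwa [h5] at h6
  have hswap' : ∀ x y : Fin m, g x = g y → swap x y ∈ H := by
    intro x y hxy
    wlog hle : x ≤ y generalizing x y
    · rw [swap_comm]
      exact this y x hxy.symm (le_of_not_ge hle)
    obtain ⟨n, hn⟩ := Nat.exists_eq_add_of_le (Fin.le_def.1 hle)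
    obtain ⟨y, hy⟩ := y
    subst hn
    exact hswap n x _ hxy
  induction hk : π.support.card using Nat.strong_induction_on generalizing π with
  | _ k ih =>
    by_cases h1 : π = 1
    · rw [h1]; exact H.one_mem
    obtain ⟨x, hx⟩ : ∃ x, π x ≠ x := by
      by_contra! h
      exact h1 (Equiv.ext h)
    have hgx : g x = g (π x) := (congrFun hπ x).symm
    have hgs : g ∘ swap x (π x) = g := by
      funext z
      rw [Function.comp_apply, swap_apply_def]
      split_ifs with h2 h3
      · rw [h2, hgx]
      · rw [h3, hgx]
      · rfl
    have h2 := ih _ (hk ▸ Perm.card_support_swap_mul hx) (swap x (π x) * π)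
      (by rw [Perm.coe_mul, ← Function.comp_assoc, hgs, hπ]) rfl
    simpa [← mul_assoc] using H.mul_mem (hswap' _ _ hgx) h2

/-- The symmetrizer of the Young subgroup preserving a monotone `g` lies in `P`. Among the
probability vectors `p` on that subgroup with `∑ p π • R π ∈ P`, the one of least Euclidean norm is
invariant under the generators, hence uniform. -/
lemma young_sum_mem {m d : ℕ} (R : Perm (Fin m) →* Matrix (Fin d) (Fin d) ℂ)
    (P : Subsemiring (Matrix (Fin d) (Fin d) ℂ)) (hcl : IsClosed (P : Set (Matrix (Fin d) (Fin d) ℂ)))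
    (hsc : ∀ x : ℝ, 0 ≤ x → algebraMap ℝ _ x ∈ P)
    (hs : ∀ i, i + 1 < m → 1 + R (simple m i) ∈ P)
    {g : Fin m → ℕ} (hg : Monotone g) :
    ∑ π ∈ Finset.univ.filter (fun π : Perm (Fin m) => g ∘ π = g), R π ∈ P := by
  classical
  let F : (Perm (Fin m) → ℝ) → Matrix (Fin d) (Fin d) ℂ := fun p => ∑ π, p π • R π
  let K : Set (Perm (Fin m) → ℝ) :=
    stdSimplex ℝ (Perm (Fin m)) ∩ ({p | ∀ π : Perm (Fin m), g ∘ π ≠ g → p π = 0} ∩ F ⁻¹' P)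
  have hKc : IsCompact K := by
    refine (isCompact_stdSimplex ℝ _).inter_right (IsClosed.inter ?_ (hcl.preimage ?_))
    · simp only [Set.ofPred_forall]
      exact isClosed_iInter fun π => isClosed_iInter fun _ =>
        isClosed_eq (continuous_apply π) continuous_const
    · exact continuous_finsetSum _ fun π _ => (continuous_apply π).smul continuous_const
  have hKne : K.Nonempty := by
    refine ⟨Pi.single 1 1, single_mem_stdSimplex ℝ 1, fun π hπ => ?_, ?_⟩
    · refine Pi.single_eq_of_ne ?_ _
      rintro rfl
      exact hπ rfl
    · change ∑ π, (Pi.single 1 1 : Perm (Fin m) → ℝ) π • R π ∈ P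
      rw [Finset.sum_eq_single 1 (fun π _ h => by simp [h]) (by simp)]
      simp [one_mem]
  obtain ⟨p, ⟨⟨hp0, hp1⟩, hpg, hpP⟩, hmin⟩ := hKc.exists_isMinOn hKne
    (f := fun p => ∑ π, p π ^ 2) (by fun_prop)
  -- averaging `p` with its translate by an admissible simple transposition stays in `K`, so
  -- minimality and strict convexity force invariance
  have hinv : ∀ i (h : i + 1 < m), g ⟨i, by omega⟩ = g ⟨i + 1, h⟩ →
      ∀ π, p (simple m i * π) = p π := by
    intro i h hgi
    set s := simple m i with hs'
    have hss : s * s = 1 := simple_mul_self m i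
    have hgs : g ∘ s = g := by
      funext x
      rw [Function.comp_apply, hs', simple_of_lt h, swap_apply_def]
      split_ifs with h1 h2
      · rw [h1, hgi]
      · rw [h2, hgi]
      · rfl
    have hsum : ∀ f : Perm (Fin m) → ℝ, ∑ π, f (s * π) = ∑ π, f π := fun f =>
      Fintype.sum_equiv (Equiv.mulLeft s) _ _ fun π => rfl
    let q : Perm (Fin m) → ℝ := fun π => (p π + p (s * π)) / 2
    have hq : q ∈ K := by
      refine ⟨⟨fun π => by have := hp0 π; have := hp0 (s * π); simp only [q]; positivity, ?_⟩,
        fun π hπ => ?_, ?_⟩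
      · simp only [q]
        rw [← Finset.sum_div, Finset.sum_add_distrib, hsum, hp1]; norm_num
      · have : g ∘ (s * π : Perm (Fin m)) ≠ g := by
          rw [Perm.coe_mul, ← Function.comp_assoc, hgs]; exact hπ
        simp only [q]
        rw [hpg π hπ, hpg _ this]; norm_num
      · have h1 : F q = algebraMap ℝ _ (1 / 2) * ((1 + R s) * F p) := by
          have h2 : R s * F p = ∑ π, p (s * π) • R π := by
            simp only [F]
            rw [Finset.mul_sum]
            refine Fintype.sum_equiv (Equiv.mulLeft s) _ _ fun π => ?_
            simp only [Equiv.coe_mulLeft]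
            rw [mul_smul_comm, ← map_mul, ← mul_assoc, hss, one_mul]
          rw [add_mul, one_mul, h2, ← Algebra.smul_def, ← Finset.sum_add_distrib, Finset.smul_sum]
          refine Finset.sum_congr rfl fun π _ => ?_
          rw [← add_smul, smul_smul]
          congr 1
          simp only [q]; ring
        change F q ∈ P
        rw [h1]
        exact mul_mem (hsc _ (by norm_num)) (mul_mem (hs i h) hpP)
    have h1 : ∑ π, p π ^ 2 ≤ ∑ π, q π ^ 2 := hmin hq
    have h2 : ∑ π, q π ^ 2 = ∑ π, p π ^ 2 - ∑ π, (p π - p (s * π)) ^ 2 / 4 := by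
      have h3 := hsum fun π => p π ^ 2 / 2
      have h4 : ∑ π, p π ^ 2 = ∑ π, p π ^ 2 / 2 + ∑ π, p (s * π) ^ 2 / 2 := by
        rw [h3, ← Finset.sum_add_distrib]
        exact Finset.sum_congr rfl fun π _ => by ring
      rw [h4, ← Finset.sum_add_distrib, ← Finset.sum_sub_distrib]
      exact Finset.sum_congr rfl fun π _ => by simp only [q]; ring
    have h3 : ∑ π, (p π - p (s * π)) ^ 2 / 4 = 0 :=
      le_antisymm (by linarith) (Finset.sum_nonneg fun π _ => by positivity)
    intro π
    have h4 := (Finset.sum_eq_zero_iff_of_nonneg fun π _ => by positivity).1 h3 π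
      (Finset.mem_univ _)
    have h5 : p π - p (s * π) = 0 := by
      have : (p π - p (s * π)) ^ 2 = 0 := by linarith
      exact pow_eq_zero_iff (two_ne_zero) |>.1 this
    linarith
  let H : Subgroup (Perm (Fin m)) :=
    { carrier := {h | ∀ π, p (h * π) = p π}
      mul_mem' := fun {a b} ha hb π => by rw [mul_assoc, ha, hb]
      one_mem' := fun π => by rw [one_mul]
      inv_mem' := fun {a} ha π => by rw [← ha (a⁻¹ * π), mul_inv_cancel_left] }
  have hconst : ∀ π : Perm (Fin m), g ∘ π = g → p π = p 1 := fun π hπ => by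
    have := young_induction hg H hinv π hπ
    simpa using this 1
  have hF : F p = p 1 • ∑ π ∈ Finset.univ.filter (fun π : Perm (Fin m) => g ∘ π = g), R π := by
    simp only [F]
    rw [Finset.smul_sum, Finset.sum_filter]
    refine Finset.sum_congr rfl fun π _ => ?_
    split_ifs with h
    · rw [hconst π h]
    · rw [hpg π h, zero_smul]
  have hp1ne : p 1 ≠ 0 := by
    intro h0
    have : ∑ π, p π = 0 := Finset.sum_eq_zero fun π _ => by
      by_cases h : g ∘ π = g
      · rw [hconst π h, h0]
      · exact hpg π h
    rw [hp1] at this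
    exact one_ne_zero this
  have : ∑ π ∈ Finset.univ.filter (fun π : Perm (Fin m) => g ∘ π = g), R π = algebraMap ℝ _ (p 1)⁻¹ * F p := by
    rw [hF, ← Algebra.smul_def, smul_smul, inv_mul_cancel₀ hp1ne, one_smul]
  rw [this]
  exact mul_mem (hsc _ (inv_nonneg.2 (hp0 1))) hpP

end Seminormal

/-! ### Universal immanants -/

namespace QImmanant

open Equiv
open MonoidAlgebra (single single_mul_single)

lemma qnonneg_mul {p q : ℝ[X]} (hp : QNonneg p) (hq : QNonneg q) : QNonneg (p * q) := fun i => by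
  rw [coeff_mul]
  exact Finset.sum_nonneg fun x _ => mul_nonneg (hp _) (hq _)

lemma qnonneg_one : QNonneg 1 := fun i => by
  rw [coeff_one]
  split_ifs <;> norm_num

lemma qnonneg_zero : QNonneg 0 := fun i => by simp

lemma qnonneg_C {x : ℝ} (hx : 0 ≤ x) : QNonneg (C x) := fun i => by
  rw [coeff_C]
  split_ifs <;> simp [hx]

lemma qnonneg_prod {α : Type*} (s : Finset α) (f : α → ℝ[X]) (h : ∀ a ∈ s, QNonneg (f a)) :
    QNonneg (∏ a ∈ s, f a) :=
  Finset.prod_induction f QNonneg (fun _ _ => qnonneg_mul) qnonneg_one h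

variable {m : ℕ}

/-- The universal immanant `∑ π, (∏ i, M i (π i)) π` of a matrix, as an element of the group
algebra of the symmetric group. -/
noncomputable def immElt (M : Fin m → Fin m → ℝ[X]) : MonoidAlgebra ℝ[X] (Perm (Fin m)) :=
  ∑ π : Perm (Fin m), single π (∏ i, M i (π i))

lemma single_mul_immElt (M : Fin m → Fin m → ℝ[X]) (σ : Perm (Fin m)) :
    single σ⁻¹ 1 * immElt M = immElt fun a b => M a (σ b) := by
  rw [immElt, immElt, Finset.mul_sum]
  refine Fintype.sum_equiv (Equiv.mulLeft σ⁻¹) _ _ fun π => ?_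
  simp [single_mul_single]

lemma immElt_mul_single (M : Fin m → Fin m → ℝ[X]) (σ : Perm (Fin m)) :
    immElt M * single σ 1 = immElt fun a b => M (σ a) b := by
  rw [immElt, immElt, Finset.sum_mul]
  refine Fintype.sum_equiv (Equiv.mulRight σ) _ _ fun π => ?_
  rw [single_mul_single, mul_one, ← Equiv.prod_comp σ]
  simp

/-- The Cauchy–Binet formula for universal immanants, before collecting the index maps `f` that
differ by a permutation. -/
lemma immElt_mul {L : ℕ} (A : Fin m → Fin L → ℝ[X]) (B : Fin L → Fin m → ℝ[X]) :
    ∑ f : Fin m → Fin L, immElt (fun j k => B (f j) k) * immElt (fun i j => A i (f j)) =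
      m.factorial • immElt fun i k => ∑ l, A i l * B l k := by
  have h1 : ∀ (f : Fin m → Fin L),
      immElt (fun j k => B (f j) k) * immElt (fun i j => A i (f j)) =
      ∑ σ : Perm (Fin m), ∑ π : Perm (Fin m),
        single π (∏ i, A i (f (σ i)) * B (f (σ i)) (π i)) := by
    intro f
    rw [immElt, immElt, Finset.mul_sum]
    refine Finset.sum_congr rfl fun σ _ => ?_
    rw [Finset.sum_mul]
    refine Fintype.sum_equiv (Equiv.mulRight σ) _ _ fun π => ?_
    rw [single_mul_single, Finset.prod_mul_distrib, mul_comm (∏ _, _)]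
    congr 2
    rw [← Equiv.prod_comp σ]
    simp
  have h2 : ∀ σ : Perm (Fin m), ∑ f : Fin m → Fin L, ∑ π : Perm (Fin m),
      single π (∏ i, A i (f (σ i)) * B (f (σ i)) (π i)) =
      immElt fun i k => ∑ l, A i l * B l k := by
    intro σ
    rw [immElt, Finset.sum_comm]
    refine Finset.sum_congr rfl fun π _ => ?_
    rw [Finset.prod_univ_sum, Fintype.piFinset_univ, ← MonoidAlgebra.singleAddHom_apply, map_sum]
    exact Fintype.sum_equiv (Equiv.arrowCongr σ⁻¹ (Equiv.refl _)) _ _ fun f => rfl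
  simp_rw [h1]
  rw [Finset.sum_comm]
  simp_rw [h2]
  simp [Fintype.card_perm]

/-- The (unnormalized) symmetrizer of the group of permutations preserving `g`. -/
noncomputable def symmetrizer (g : Fin m → ℕ) : MonoidAlgebra ℝ[X] (Perm (Fin m)) :=
  ∑ π ∈ Finset.univ.filter (fun π : Perm (Fin m) => g ∘ π = g), single π 1

/-- A semiring of positive elements of the group algebra: it contains the `q`-nonnegative scalars
and the symmetrizers of Young subgroups. -/
structure IsPositive (Q : Subsemiring (MonoidAlgebra ℝ[X] (Perm (Fin m)))) : Prop where
  scalar : ∀ p, QNonneg p → single 1 p ∈ Q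
  young : ∀ g : Fin m → ℕ, Monotone g → symmetrizer g ∈ Q

/-- The infinite matrix `M` is good if the universal immanants of all its `m × m` submatrices,
with repeated rows and columns allowed, are positive. -/
def Good (Q : Subsemiring (MonoidAlgebra ℝ[X] (Perm (Fin m)))) (M : ℕ → ℕ → ℝ[X]) : Prop :=
  ∀ I J : Fin m → ℕ, Monotone I → Monotone J → immElt (fun a b => M (I a) (J b)) ∈ Q

variable {Q : Subsemiring (MonoidAlgebra ℝ[X] (Perm (Fin m)))}

lemma IsPositive.of_nsmul (hQ : IsPositive Q) {n : ℕ} (hn : n ≠ 0)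
    {x : MonoidAlgebra ℝ[X] (Perm (Fin m))} (hx : n • x ∈ Q) : x ∈ Q := by
  have h1 : x = single 1 (C (n : ℝ)⁻¹) * (n • x) := by
    have h2 : (n • x) = single 1 (C (n : ℝ)) * x := by
      rw [nsmul_eq_mul]
      rfl
    rw [h2, ← mul_assoc, single_mul_single, one_mul, ← C_mul,
      inv_mul_cancel₀ (Nat.cast_ne_zero.2 hn), C_1, ← MonoidAlgebra.one_def, one_mul]
  rw [h1]
  exact Q.mul_mem (hQ.scalar _ (qnonneg_C (by positivity))) hx

/-- Products of good matrices are good. In the Cauchy–Binet formula the summand of `f` is unchanged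
when `f` is sorted, and then both of its factors are positive. -/
lemma Good.mul (hQ : IsPositive Q) {A B M : ℕ → ℕ → ℝ[X]} (hA : Good Q A) (hB : Good Q B)
    (hM : ∀ j, ∃ L₀, ∀ L ≥ L₀, ∀ i, M i j = ∑ l ∈ Finset.range L, A i l * B l j) :
    Good Q M := by
  intro I J hI hJ
  choose L₀ hL₀ using hM
  let L := ∑ b, L₀ (J b)
  have h1 : (fun a b => M (I a) (J b)) = fun a b => ∑ l : Fin L, A (I a) l * B l (J b) := by
    funext a b
    rw [hL₀ (J b) L (Finset.single_le_sum (f := fun b => L₀ (J b)) (fun _ _ => Nat.zero_le _)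
      (Finset.mem_univ b)), Finset.sum_range]
  refine hQ.of_nsmul (Nat.factorial_ne_zero m) ?_
  rw [h1, ← immElt_mul (fun i (l : Fin L) => A (I i) l) fun l k => B l (J k)]
  refine Q.sum_mem fun f _ => ?_
  -- sorting `f` changes both factors by inverse permutations
  let τ := Tuple.sort f
  have hτ : Monotone (f ∘ τ) := Tuple.monotone_sort f
  have h2 := immElt_mul_single (fun j k => B (f j) (J k)) τ
  have h3 := single_mul_immElt (fun i j => A (I i) (f j)) τ
  have h4 : immElt (fun j k => B (f j) (J k)) * immElt (fun i j => A (I i) (f j)) =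
      immElt (fun j k => B (f (τ j)) (J k)) * immElt (fun i j => A (I i) (f (τ j))) := by
    rw [← h2, ← h3, mul_assoc, ← mul_assoc (single τ 1), single_mul_single]
    simp [← MonoidAlgebra.one_def]
  rw [h4]
  exact Q.mul_mem (hB (fun j => f (τ j)) J (fun a b h => hτ h) hJ)
    (hA I (fun j => f (τ j)) hI fun a b h => hτ h)

/-- A `q`-nonnegative matrix supported on a chain of `ℕ × ℕ` is good. All nonzero terms of the
universal immanant have the same weight, and their permutations lie in a product of two Young
subgroups. -/
lemma Good.one (hQ : IsPositive Q) {M : ℕ → ℕ → ℝ[X]} (hM : ∀ k c, QNonneg (M k c))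
    (hchain : ∀ k c k' c', M k c ≠ 0 → M k' c' ≠ 0 → (k ≤ k' ∧ c ≤ c') ∨ (k' ≤ k ∧ c' ≤ c)) :
    Good Q M := by
  intro I J hI hJ
  set x := immElt fun a b => M (I a) (J b) with hx
  let SI := Finset.univ.filter (fun π : Perm (Fin m) => I ∘ π = I)
  let SJ := Finset.univ.filter (fun π : Perm (Fin m) => J ∘ π = J)
  have hSI : ∀ σ : Perm (Fin m), I ∘ σ = I → x * single σ 1 = x := fun σ hσ => by
    rw [hx, immElt_mul_single]
    congr 1; funext a b
    exact congrArg (fun i => M i (J b)) (congrFun hσ a)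
  have hSJ : ∀ σ : Perm (Fin m), J ∘ σ = J → single σ⁻¹ 1 * x = x := fun σ hσ => by
    rw [hx, single_mul_immElt]
    congr 1; funext a b
    exact congrArg (fun j => M (I a) j) (congrFun hσ b)
  have hinv : ∀ (g : Fin m → ℕ) (σ : Perm (Fin m)), g ∘ σ = g → g ∘ (σ⁻¹ : Perm (Fin m)) = g := by
    intro g σ hσ
    conv_lhs => rw [← hσ]
    funext a
    simp
  have hxI : x * symmetrizer I = SI.card • x := by
    rw [symmetrizer, Finset.mul_sum, Finset.sum_congr rfl
      fun σ hσ => hSI σ (Finset.mem_filter.1 hσ).2, Finset.sum_const]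
  have hxJ : symmetrizer J * x = SJ.card • x := by
    rw [symmetrizer, Finset.sum_mul, Finset.sum_congr rfl
      fun σ hσ => ?_, Finset.sum_const]
    simpa using hSJ σ⁻¹ (hinv J σ (Finset.mem_filter.1 hσ).2)
  have habs : ∀ (g : Fin m → ℕ) (σ : Perm (Fin m)), g ∘ σ = g →
      symmetrizer g * single σ 1 = symmetrizer g ∧
      single σ 1 * symmetrizer g = symmetrizer g := by
    intro g σ hσ
    simp only [symmetrizer, Finset.sum_filter, Finset.sum_mul, Finset.mul_sum]
    constructor
    · refine Fintype.sum_equiv (Equiv.mulRight σ) _ _ fun π => ?_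
      have : g ∘ (π * σ : Perm (Fin m)) = g ↔ g ∘ π = g := by
        rw [Perm.coe_mul, ← Function.comp_assoc]
        constructor
        · intro h
          funext a
          have h1 := congrFun h (σ⁻¹ a)
          have h2 := congrFun (hinv g σ hσ) a
          simp only [Function.comp_apply, Perm.coe_inv, Equiv.apply_symm_apply] at h1 h2 ⊢
          exact h1.trans h2
        · intro h
          rw [h, hσ]
      simp only [Equiv.coe_mulRight, this, ite_mul, zero_mul, single_mul_single, mul_one]
    · refine Fintype.sum_equiv (Equiv.mulLeft σ) _ _ fun π => ?_
      have : g ∘ (σ * π : Perm (Fin m)) = g ↔ g ∘ π = g := by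
        rw [Perm.coe_mul, ← Function.comp_assoc, hσ]
      simp only [Equiv.coe_mulLeft, this, mul_ite, mul_zero, single_mul_single, mul_one]
  have hterm : ∀ π : Perm (Fin m),
      symmetrizer J * single π (∏ a, M (I a) (J (π a))) * symmetrizer I ∈ Q := by
    intro π
    by_cases h0 : ∏ a, M (I a) (J (π a)) = 0
    · simp [h0, Q.zero_mem]
    have hne : ∀ a, M (I a) (J (π a)) ≠ 0 := fun a =>
      Finset.prod_ne_zero_iff.1 h0 a (Finset.mem_univ a)
    -- sort the edges `(I a, J (π a))` along the chain
    let τ := Tuple.sort fun a => I a + J (π a)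
    have hτ : Monotone ((fun a => I a + J (π a)) ∘ τ) := Tuple.monotone_sort _
    have hmon : ∀ a b, a ≤ b → I (τ a) ≤ I (τ b) ∧ J (π (τ a)) ≤ J (π (τ b)) := by
      intro a b hab
      have h1 := hτ hab
      simp only [Function.comp_apply] at h1
      rcases hchain _ _ _ _ (hne (τ a)) (hne (τ b)) with h | h
      · exact h
      · omega
    have huniq : ∀ (g : Fin m → ℕ) (σ : Perm (Fin m)), Monotone g → Monotone (g ∘ σ) →
        g ∘ σ = g := by
      intro g σ hg hgσ
      simpa using Tuple.unique_monotone (σ := σ) (τ := 1) hgσ hg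
    have hIτ : I ∘ τ = I := huniq I τ hI fun a b h => (hmon a b h).1
    have hJτ : J ∘ (π * τ : Perm (Fin m)) = J := huniq J (π * τ) hJ fun a b h => (hmon a b h).2
    have h1 : single π (∏ a, M (I a) (J (π a))) =
        single (π * τ) 1 * (single 1 (∏ a, M (I a) (J (π a))) * single τ⁻¹ 1) := by
      simp [single_mul_single]
    have h2 : symmetrizer J * single π (∏ a, M (I a) (J (π a))) * symmetrizer I =
        symmetrizer J * single 1 (∏ a, M (I a) (J (π a))) * symmetrizer I := by
      rw [h1, ← mul_assoc, (habs J _ hJτ).1, mul_assoc, mul_assoc,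
        (habs I _ (hinv I _ hIτ)).2, ← mul_assoc]
    rw [h2]
    exact Q.mul_mem (Q.mul_mem (hQ.young J hJ) (hQ.scalar _ (qnonneg_prod _ _ fun a _ => hM _ _)))
      (hQ.young I hI)
  have h1 : SJ.card ≠ 0 := Finset.card_ne_zero.2 ⟨1, Finset.mem_filter.2 ⟨Finset.mem_univ _, rfl⟩⟩
  have h2 : SI.card ≠ 0 := Finset.card_ne_zero.2 ⟨1, Finset.mem_filter.2 ⟨Finset.mem_univ _, rfl⟩⟩
  refine hQ.of_nsmul h1 (hQ.of_nsmul h2 ?_)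
  rw [← hxJ, ← mul_smul_comm, ← hxI, ← mul_assoc, hx, immElt, Finset.mul_sum, Finset.sum_mul]
  exact Q.sum_mem fun π _ => hterm π

end QImmanant

/-! ### The planar network of a Catalan–Stieltjes matrix -/

namespace QImmanant

variable {m : ℕ} {Q : Subsemiring (MonoidAlgebra ℝ[X] (Equiv.Perm (Fin m)))}

/-- A tridiagonal step preserves goodness when its entries come from the five edge weights of a
planar network: level `x` is joined to the intermediate points `2x`, `2x + 1`, `2x + 2` with weights
`a x`, `b x`, `d x`, and these are joined to level `x` with weights `a' x`, `1`, `d' x`. -/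
lemma Good.step (hQ : IsPositive Q) {G G' : ℕ → ℕ → ℝ[X]} (hG : Good Q G) {a b d a' d' : ℕ → ℝ[X]}
    (ha : ∀ x, QNonneg (a x)) (hb : ∀ x, QNonneg (b x)) (hd : ∀ x, QNonneg (d x))
    (ha' : ∀ x, QNonneg (a' x)) (hd' : ∀ x, QNonneg (d' x))
    (h0 : ∀ p, G' p 0 = G p 0 * (a 0 * a' 0 + b 0 + d 0 * d' 0) + G p 1 * (a 1 * d' 0))
    (hS : ∀ p y, G' p (y + 1) = G p y * (d y * a' (y + 1)) +
      G p (y + 1) * (a (y + 1) * a' (y + 1) + b (y + 1) + d (y + 1) * d' (y + 1)) +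
      G p (y + 2) * (a (y + 2) * d' (y + 1))) : Good Q G' := by
  let A : ℕ → ℕ → ℝ[X] := fun x l =>
    if l = 2 * x then a x else if l = 2 * x + 1 then b x else if l = 2 * x + 2 then d x else 0
  let B : ℕ → ℕ → ℝ[X] := fun l y =>
    if l = 2 * y then a' y else if l = 2 * y + 1 then 1 else if l = 2 * y + 2 then d' y else 0
  have hA : Good Q A := by
    refine Good.one hQ (fun x l => ?_) fun x l x' l' h h' => ?_
    · simp only [A]
      split_ifs
      exacts [ha x, hb x, hd x, qnonneg_zero]
    · have h1 : l = 2 * x ∨ l = 2 * x + 1 ∨ l = 2 * x + 2 := by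
        by_contra! hc; simp [A, hc] at h
      have h2 : l' = 2 * x' ∨ l' = 2 * x' + 1 ∨ l' = 2 * x' + 2 := by
        by_contra! hc; simp [A, hc] at h'
      omega
  have hB : Good Q B := by
    refine Good.one hQ (fun l y => ?_) fun l x l' x' h h' => ?_
    · simp only [B]
      split_ifs
      exacts [ha' y, qnonneg_one, hd' y, qnonneg_zero]
    · have h1 : l = 2 * x ∨ l = 2 * x + 1 ∨ l = 2 * x + 2 := by
        by_contra! hc; simp [B, hc] at h
      have h2 : l' = 2 * x' ∨ l' = 2 * x' + 1 ∨ l' = 2 * x' + 2 := by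
        by_contra! hc; simp [B, hc] at h'
      omega
  let J : ℕ → ℕ → ℝ[X] := fun x y => A x (2 * y) * a' y + A x (2 * y + 1) + A x (2 * y + 2) * d' y
  have hJ : Good Q J := by
    refine Good.mul hQ hA hB fun y => ⟨2 * y + 3, fun L hL x => ?_⟩
    rw [← Finset.add_sum_erase (Finset.range L) _ (show 2 * y ∈ _ by simp; omega),
      ← Finset.add_sum_erase ((Finset.range L).erase (2 * y)) _ (show 2 * y + 1 ∈ _ by simp; omega),
      ← Finset.add_sum_erase (((Finset.range L).erase (2 * y)).erase (2 * y + 1)) _ (show 2 * y + 2 ∈ _ by simp; omega),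
      Finset.sum_eq_zero fun l hl => ?_]
    · simp [J, B]; ring
    · simp at hl
      simp [B, hl]
  have hJ1 : ∀ x, J x x = a x * a' x + b x + d x * d' x := fun x => by simp [J, A]
  have hJ2 : ∀ x, J x (x + 1) = d x * a' (x + 1) := fun x => by
    simp only [J, A]
    rw [if_neg (by omega), if_neg (by omega), if_pos (by omega), if_neg (by omega),
      if_neg (by omega), if_neg (by omega), if_neg (by omega), if_neg (by omega), if_neg (by omega)]
    ring
  have hJ3 : ∀ x, J (x + 1) x = a (x + 1) * d' x := fun x => by
    simp only [J, A]
    rw [if_neg (by omega), if_neg (by omega), if_neg (by omega), if_neg (by omega),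
      if_neg (by omega), if_neg (by omega), if_pos (by omega)]
    ring
  have hJ4 : ∀ x y, x ≠ y → y ≠ x + 1 → x ≠ y + 1 → J x y = 0 := fun x y h1 h2 h3 => by
    simp only [J, A]
    rw [if_neg (by omega), if_neg (by omega), if_neg (by omega), if_neg (by omega),
      if_neg (by omega), if_neg (by omega), if_neg (by omega), if_neg (by omega), if_neg (by omega)]
    ring
  refine Good.mul hQ hG hJ fun y => ⟨y + 2, fun L hL p => ?_⟩
  cases y with
  | zero =>
    rw [← Finset.add_sum_erase (Finset.range L) _ (show 0 ∈ _ by simp; omega),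
      ← Finset.add_sum_erase ((Finset.range L).erase (0)) _ (show 1 ∈ _ by simp; omega),
      Finset.sum_eq_zero fun l hl => ?_, h0, hJ1, hJ3]
    · ring
    · simp at hl
      rw [hJ4 l 0 (by omega) (by omega) (by omega), mul_zero]
  | succ y =>
    rw [← Finset.add_sum_erase (Finset.range L) _ (show y ∈ _ by simp; omega),
      ← Finset.add_sum_erase ((Finset.range L).erase (y)) _ (show y + 1 ∈ _ by simp; omega),
      ← Finset.add_sum_erase (((Finset.range L).erase (y)).erase (y + 1)) _ (show y + 2 ∈ _ by simp; omega),
      Finset.sum_eq_zero fun l hl => ?_, hS, hJ1, hJ2, hJ3]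
    · ring
    · simp at hl
      rw [hJ4 l (y + 1) (by omega) (by omega) (by omega), mul_zero]

/-- The entries of a Catalan–Stieltjes matrix, together with the recursion and the inequalities
on its weights. -/
structure Catalan (r s t : ℕ → ℝ[X]) (c : ℕ → ℕ → ℝ[X]) : Prop where
  hr : ∀ k, QNonneg (r k)
  ht : ∀ k, 1 ≤ k → QNonneg (t k)
  c00 : c 0 0 = 1
  upper : ∀ n k, n < k → c n k = 0
  rec0 : ∀ n, c (n + 1) 0 = s 0 * c n 0 + t 1 * c n 1
  recS : ∀ n k, c (n + 1) (k + 1) = r k * c n k + s (k + 1) * c n (k + 1) + t (k + 2) * c n (k + 2)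
  cond0 : QNonneg (s 0 - r 0)
  condS : ∀ k, 1 ≤ k → QNonneg (s k - (r k + t k))

/-- Weighted lattice paths, started at the level `p ≤ N` and observed after `u` steps. Level `N + k`
stands for height `k`; below level `N` a path can only move up, with weight one, so that it starts
at height zero with a delay of `N - p` steps. -/
noncomputable def delayed (c : ℕ → ℕ → ℝ[X]) (N u p x : ℕ) : ℝ[X] :=
  if p ≤ N then
    if p + u < N then if x = p + u then 1 else 0
    else if N ≤ x then c (p + u - N) (x - N) else 0
  else 0

/-- Weighted lattice paths of length `p`, observed after `u` further steps. Once it has reached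
height zero, a path may leave the level `N` downwards; it must then move down, with weight one, at
every later step. -/
noncomputable def stopped (c : ℕ → ℕ → ℝ[X]) (N u p x : ℕ) : ℝ[X] :=
  if p ≤ N then
    if N ≤ x then c (p + u) (x - N)
    else if N ≤ x + u then c (p + u + x - N) 0 else 0
  else 0

variable {r s t : ℕ → ℝ[X]} {c : ℕ → ℕ → ℝ[X]}

lemma good_delayed (hQ : IsPositive Q) (h : Catalan r s t c) (N u : ℕ) :
    Good Q (delayed c N u) := by
  induction u with
  | zero =>
    have h1 : ∀ p x, delayed c N 0 p x = if p ≤ N ∧ x = p then 1 else 0 := by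
      intro p x
      simp only [delayed, add_zero]
      by_cases hp : p ≤ N
      · by_cases hpN : p < N
        · simp [hp, hpN]
        · obtain rfl : p = N := by omega
          rcases lt_trichotomy x p with hx | rfl | hx
          · simp [show ¬ p ≤ x by omega, hx.ne]
          · simp [h.c00]
          · simp [hx.le, hx.ne', h.upper 0 (x - p) (by omega)]
      · simp [hp]
    refine Good.one hQ (fun p x => ?_) fun p x p' x' hx hx' => ?_
    · rw [h1]
      split_ifs
      exacts [qnonneg_one, qnonneg_zero]
    · rw [h1] at hx hx'
      have := (ite_ne_right_iff.1 hx).1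
      have := (ite_ne_right_iff.1 hx').1
      omega
  | succ u ih =>
    refine Good.step hQ ih (a := fun x => if x ≤ N then 0 else t (x - N))
      (b := fun x => if x < N then 0 else if x = N then s 0 - r 0 else
        s (x - N) - (r (x - N) + t (x - N)))
      (d := fun x => if x < N then 1 else r (x - N)) (a' := fun _ => 1)
      (d' := fun x => if x < N then 0 else 1) (fun x => ?_) (fun x => ?_) (fun x => ?_)
      (fun x => qnonneg_one) (fun x => ?_) (fun p => ?_) fun p y => ?_
    · split_ifs
      exacts [qnonneg_zero, h.ht _ (by omega)]
    · split_ifs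
      exacts [qnonneg_zero, h.cond0, h.condS _ (by omega)]
    · split_ifs
      exacts [qnonneg_one, h.hr _]
    · split_ifs
      exacts [qnonneg_zero, qnonneg_one]
    · by_cases hp : p ≤ N
      swap
      · simp [delayed, hp]
      rcases Nat.eq_zero_or_pos N with rfl | hN
      · obtain rfl : p = 0 := by omega
        simp [delayed, h.rec0]
        ring
      · simp [delayed, hN, show ¬ N ≤ 0 by omega, show 1 ≤ N by omega]
    · by_cases hp : p ≤ N
      swap
      · simp [delayed, hp]
      rcases lt_trichotomy (y + 1) N with hy | rfl | hy
      · simp only [delayed, hp, if_true, if_pos hy, if_pos (show y < N by omega),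
          if_neg (show ¬ N ≤ y by omega), if_neg (show ¬ N ≤ y + 1 by omega), if_pos hy.le,
          if_pos (show y + 2 ≤ N by omega)]
        split_ifs <;> first | omega | simp
      · rcases lt_trichotomy (p + u) y with hu | hu | hu
        · simp [delayed, hp, hu.ne', show p + u < y + 1 by omega,
            show p + (u + 1) < y + 1 by omega, show ¬ y + 1 = p + u by omega,
            show ¬ y + 1 = p + (u + 1) by omega, show ¬ y + 2 = p + u by omega]
        · simp [delayed, hp, hu, show ¬ p + (u + 1) < y + 1 by omega,
            show p + (u + 1) - (y + 1) = 0 by omega, h.c00]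
        · obtain ⟨n, hn⟩ := Nat.exists_eq_add_of_le hu
          have hn' : p + (u + 1) = y.succ + (n + 1) := by omega
          simp [delayed, hp, hn, hn', h.rec0, show ¬ y.succ + n < y + 1 by omega,
            show ¬ y.succ + (n + 1) < y + 1 by omega]
          ring
      · obtain ⟨k, rfl⟩ := Nat.exists_eq_add_of_le (Nat.lt_succ_iff.1 hy)
        rcases lt_trichotomy (p + u + 1) N with hu | hu | hu
        · simp [delayed, hp, show p + u < N by omega, show p + (u + 1) < N by omega,
            show ¬ N + k = p + u by omega, show ¬ N + k + 1 = p + u by omega,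
            show ¬ N + k + 2 = p + u by omega, show ¬ N + k + 1 = p + (u + 1) by omega]
        · simp [delayed, hp, show p + u < N by omega, show p + (u + 1) = N by omega,
            show ¬ N + k = p + u by omega, show ¬ N + (k + 1) = p + u by omega,
            show ¬ N + (k + 2) = p + u by omega, add_assoc, h.upper 0 (k + 1) (by omega)]
        · obtain ⟨n, hn⟩ := Nat.exists_eq_add_of_le (Nat.lt_succ_iff.1 hu)
          have hn' : p + (u + 1) = N + (n + 1) := by omega
          simp [delayed, hp, hn, hn', add_assoc, h.recS]
          ring

lemma good_stopped (hQ : IsPositive Q) (h : Catalan r s t c) (N u : ℕ) :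
    Good Q (stopped c N u) := by
  induction u with
  | zero =>
    convert good_delayed hQ h N N using 1
    funext p x
    simp only [stopped, delayed, add_zero, add_tsub_cancel_right, if_neg (show ¬ p + N < N by omega)]
    split_ifs <;> rfl
  | succ u ih =>
    refine Good.step hQ ih (a := fun x => if x ≤ N then 1 else t (x - N))
      (b := fun x => if x < N then 0 else if x = N then s 0 - r 0 else
        s (x - N) - (r (x - N) + t (x - N)))
      (d := fun x => if x < N then 0 else r (x - N)) (a' := fun x => if x ≤ N then 0 else 1)
      (d' := fun _ => 1) (fun x => ?_) (fun x => ?_) (fun x => ?_)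
      (fun x => ?_) (fun x => qnonneg_one) (fun p => ?_) fun p y => ?_
    · split_ifs
      exacts [qnonneg_one, h.ht _ (by omega)]
    · split_ifs
      exacts [qnonneg_zero, h.cond0, h.condS _ (by omega)]
    · split_ifs
      exacts [qnonneg_zero, h.hr _]
    · split_ifs
      exacts [qnonneg_zero, qnonneg_one]
    · by_cases hp : p ≤ N
      swap
      · simp [stopped, hp]
      rcases Nat.eq_zero_or_pos N with rfl | hN
      · obtain rfl : p = 0 := by omega
        simp [stopped, h.rec0, ← add_assoc]
        ring
      · rcases lt_or_eq_of_le (Nat.succ_le_of_lt hN) with hN' | rfl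
        · simp [stopped, hp, hN, hN'.le, show ¬ N ≤ 1 by omega,
            show ¬ N ≤ 0 by omega, add_comm 1 u, add_assoc]
        · simp [stopped, hp]
    · by_cases hp : p ≤ N
      swap
      · simp [stopped, hp]
      rcases lt_trichotomy (y + 1) N with hy | rfl | hy
      · have h1 : p + (u + 1) + (y + 1) = p + u + (y + 2) := by omega
        have h2 : y + 1 + (u + 1) = y + 2 + u := by omega
        simp only [stopped, hp, if_true, if_pos hy, if_pos hy.le, if_neg (show ¬ N ≤ y by omega),
          if_neg (show ¬ N ≤ y + 1 by omega), if_pos (show y < N by omega),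
          if_pos (show y + 2 ≤ N by omega), h1, h2]
        rcases lt_or_eq_of_le (show y + 2 ≤ N by omega) with hy' | rfl
        · simp [show ¬ N ≤ y + 2 by omega]
        · simp
      · simp [stopped, hp, ← add_assoc, h.rec0]
        ring
      · obtain ⟨k, rfl⟩ := Nat.exists_eq_add_of_le (Nat.lt_succ_iff.1 hy)
        simp [stopped, hp, add_assoc]
        rw [← add_assoc p, h.recS]
        ring

/-- Universal immanants of submatrices of the Catalan–Stieltjes matrix are positive. -/
lemma immElt_catalan_mem (hQ : IsPositive Q) (h : Catalan r s t c) {i j : Fin m → ℕ}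
    (hi : Monotone i) (hj : Monotone j) : immElt (fun a b => c (i a) (j b)) ∈ Q := by
  let N := ∑ a, i a
  have hN : ∀ a, i a ≤ N := fun a =>
    Finset.single_le_sum (f := i) (fun _ _ => Nat.zero_le _) (Finset.mem_univ a)
  have h1 := good_stopped hQ h N 0 i (fun b => N + j b) hi fun a b hab => by
    have := hj hab
    dsimp only; omega
  simpa [stopped, hN] using h1

/-- Universal immanants of submatrices of the Hankel matrix are positive. -/
lemma immElt_hankel_mem (hQ : IsPositive Q) (h : Catalan r s t c) {i j : Fin m → ℕ}
    (hi : Monotone i) (hj : Monotone j) : immElt (fun a b => c (i a + j b) 0) ∈ Q := by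
  let N := ∑ a, (i a + j a)
  have hN : ∀ a, i a + j a ≤ N := fun a =>
    Finset.single_le_sum (f := fun a => i a + j a) (fun _ _ => Nat.zero_le _) (Finset.mem_univ a)
  have h1 := good_stopped hQ h N N i j hi hj
  convert h1 using 1
  congr 1
  funext a b
  have ha := hN a
  have hb := hN b
  rw [stopped, if_pos (by omega)]
  split_ifs with h2
  · obtain h3 : j b = N := by omega
    simp [h3]
  · congr 1; omega
  · omega

end QImmanant

/-! ### Immanants -/

namespace QImmanant

open Equiv

/-- Polynomials all of whose coefficients lie in a given semiring. -/
def coeffsIn {A : Type*} [Semiring A] (P : Subsemiring A) : Subsemiring A[X] where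
  carrier := {p | ∀ n, p.coeff n ∈ P}
  mul_mem' hp hq n := by
    rw [coeff_mul]
    exact P.sum_mem fun x _ => P.mul_mem (hp _) (hq _)
  one_mem' n := by
    rw [coeff_one]
    split_ifs
    exacts [P.one_mem, P.zero_mem]
  add_mem' hp hq n := by
    rw [coeff_add]
    exact P.add_mem (hp n) (hq n)
  zero_mem' n := by
    rw [coeff_zero]
    exact P.zero_mem

/-- The extension of a matrix representation `R` to the group algebra over `ℝ[q]`. -/
noncomputable def extend {m d : ℕ} (R : Perm (Fin m) →* Matrix (Fin d) (Fin d) ℂ) :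
    MonoidAlgebra ℝ[X] (Perm (Fin m)) →+* (Matrix (Fin d) (Fin d) ℂ)[X] :=
  MonoidAlgebra.liftNCRingHom (mapRingHom (algebraMap ℝ (Matrix (Fin d) (Fin d) ℂ)))
    ((C : Matrix (Fin d) (Fin d) ℂ →+* _).toMonoidHom.comp R) fun p g => by
      change _ * C _ = C _ * _
      ext1 n
      rw [coeff_mul_C, coeff_C_mul, coe_mapRingHom, coeff_map]
      exact Algebra.commutes _ _

lemma extend_single {m d : ℕ} (R : Perm (Fin m) →* Matrix (Fin d) (Fin d) ℂ) (g : Perm (Fin m))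
    (p : ℝ[X]) (n : ℕ) :
    (extend R (MonoidAlgebra.single g p)).coeff n = algebraMap ℝ _ (p.coeff n) * R g := by
  have h : extend R (MonoidAlgebra.single g p) =
      p.map (algebraMap ℝ (Matrix (Fin d) (Fin d) ℂ)) * C (R g) :=
    MonoidAlgebra.liftNC_single _ _ _ _
  rw [h, coeff_mul_C, coeff_map]

/-- The immanants of `M` are `q`-nonnegative once its universal immanant lies in every positive
semiring. -/
lemma qnonneg_immanant {m : ℕ} {χ : Perm (Fin m) → ℝ} (hχ : IsIrrChar χ)
    (M : Fin m → Fin m → ℝ[X])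
    (hM : ∀ Q : Subsemiring (MonoidAlgebra ℝ[X] (Perm (Fin m))), IsPositive Q → immElt M ∈ Q) :
    QNonneg (∑ π : Perm (Fin m), χ π • ∏ a, M a (π a)) := by
  obtain ⟨V, -, hV⟩ := hχ
  obtain ⟨d, R, P, hcl, hsc, hs, htr, hR⟩ := Seminormal.exists_positive_semiring V.ρ
  have hQ : IsPositive ((coeffsIn P).comap (extend R)) := by
    refine ⟨fun p hp n => ?_, fun g hg n => ?_⟩
    · rw [extend_single, map_one, mul_one]
      exact hsc _ (hp n)
    · simp only [symmetrizer, map_sum, finsetSum_coeff, extend_single, coeff_one]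
      by_cases hn : n = 0
      · simpa [hn] using Seminormal.young_sum_mem R P hcl hsc hs hg
      · simp [hn, P.zero_mem]
  intro n
  have h1 := htr _ (hM _ hQ n)
  simp only [immElt, map_sum, finsetSum_coeff, extend_single, Matrix.trace_sum, Complex.re_sum,
    ← Algebra.smul_def, Matrix.trace_smul, hR] at h1
  rw [finsetSum_coeff]
  refine h1.trans_eq (Finset.sum_congr rfl fun π _ => ?_)
  have h2 : LinearMap.trace ℂ V (V.ρ π) = (χ π : ℂ) := (hV π).symm
  rw [h2]
  simp [mul_comm]

end QImmanant

theorem stmt5 (r s t : ℕ → Polynomial ℝ) (c : ℕ → ℕ → Polynomial ℝ)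
    (hr : ∀ k, QNonneg (r k)) (hs : ∀ k, QNonneg (s k)) (ht : ∀ k, 1 ≤ k → QNonneg (t k))
    (hc00 : c 0 0 = 1)
    (hupper : ∀ n k, n < k → c n k = 0)
    (hrec0 : ∀ n, c (n + 1) 0 = s 0 * c n 0 + t 1 * c n 1)
    (hrec : ∀ n k, c (n + 1) (k + 1) =
      r k * c n k + s (k + 1) * c n (k + 1) + t (k + 2) * c n (k + 2))
    (hcond : (QNonneg (s 0 - r 0) ∧ ∀ k, 1 ≤ k → QNonneg (s k - (r k + t k))))
    (m : ℕ) (hm : 1 ≤ m) (χ : Equiv.Perm (Fin m) → ℝ) (hχ : IsIrrChar χ)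
    (i j : Fin m → ℕ) (hi : StrictMono i) (hj : StrictMono j) :
    QNonneg (∑ π : Equiv.Perm (Fin m), χ π • ∏ a : Fin m, c (i a) (j (π a))) ∧
    QNonneg (∑ π : Equiv.Perm (Fin m), χ π • ∏ a : Fin m, c (i a + j (π a)) 0) := by
  have h : QImmanant.Catalan r s t c := ⟨hr, ht, hc00, hupper, hrec0, hrec, hcond.1, hcond.2⟩
  exact ⟨QImmanant.qnonneg_immanant hχ (fun a b => c (i a) (j b)) fun Q hQ =>
      QImmanant.immElt_catalan_mem hQ h hi.monotone hj.monotone,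
    QImmanant.qnonneg_immanant hχ (fun a b => c (i a + j b) 0) fun Q hQ =>
      QImmanant.immElt_hankel_mem hQ h hi.monotone hj.monotone⟩
end
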